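/- Let Φ : ∂^c(A∗B) → ∂_*(A∗B) be the map from the combinatorial Morse boundary to the Morse boundary of the free product, sending a combinatorial Morse geodesic to the class of the concatenated geodesic ray. Then Φ is a bijection. -/

import Mathlib

open Set

/-- A Morse gauge. -/
abbrev MorseGauge := ℝ → ℝ → ℝ

/-- The constant `δ_M` associated to a Morse gauge `M`. -/
noncomputable def deltaM (M : MorseGauge) : ℝ :=
  max (4 * M 1 (2 * M 5 0) + 2 * M 5 0) (8 * M 3 0)

/-- A list of letters from `S ∪ S⁻¹`. -/
def IsWordOver {G : Type*} [Group G] (S : Set G) (l : List G) : Prop :=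
  ∀ x ∈ l, x ∈ S ∨ x⁻¹ ∈ S

/-- The word metric on `G` associated to the generating set `S`. -/
noncomputable def wordDist {G : Type*} [Group G] (S : Set G) (x y : G) : ℝ :=
  sInf {r : ℝ | ∃ l : List G, IsWordOver S l ∧ l.prod = x⁻¹ * y ∧ r = l.length}

section NatPaths

variable {G : Type*}

/-- A discrete `(L,e)`-quasi-geodesic (with respect to the distance function `d`),
parametrised over a set of naturals. -/
def IsQGOnN (d : G → G → ℝ) (L e : ℝ) (γ : ℕ → G) (s : Set ℕ) : Prop :=
  ∀ i ∈ s, ∀ j ∈ s,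
    (1 / L) * |(i : ℝ) - (j : ℝ)| - e ≤ d (γ i) (γ j) ∧
      d (γ i) (γ j) ≤ L * |(i : ℝ) - (j : ℝ)| + e

/-- A discrete geodesic with respect to `d`. -/
def IsGeodesicOnN (d : G → G → ℝ) (γ : ℕ → G) (s : Set ℕ) : Prop :=
  ∀ i ∈ s, ∀ j ∈ s, d (γ i) (γ j) = |(i : ℝ) - (j : ℝ)|

/-- The (discrete) path `γ` on `s` is `M`-Morse with respect to `d`. -/
def IsMorseOnN (d : G → G → ℝ) (M : MorseGauge) (γ : ℕ → G) (s : Set ℕ) : Prop :=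
  ∀ L e, 1 ≤ L → 0 ≤ e → ∀ (η : ℕ → G) (a b : ℕ), a ≤ b →
    IsQGOnN d L e η (Icc a b) → η a ∈ γ '' s → η b ∈ γ '' s →
    ∀ i ∈ Icc a b, ∃ j ∈ s, d (η i) (γ j) ≤ M L e

/-- A Morse geodesic ray from the basepoint `o`. -/
def IsMorseRayN (d : G → G → ℝ) (o : G) (γ : ℕ → G) : Prop :=
  γ 0 = o ∧ IsGeodesicOnN d γ univ ∧ ∃ M, IsMorseOnN d M γ univ

/-- The type of Morse geodesic rays from `o`. -/
def MRayN (d : G → G → ℝ) (o : G) := {γ : ℕ → G // IsMorseRayN d o γ}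

/-- The Morse boundary: Morse rays from `o` up to bounded (Hausdorff) distance. -/
def MorseBoundaryN (d : G → G → ℝ) (o : G) :=
  Quot (fun γ γ' : MRayN d o => ∃ C, ∀ i, d (γ.1 i) (γ'.1 i) ≤ C)

/-- `z` is an `M`-Morse direction: it admits an `M`-Morse realization. -/
def MorseDirN (d : G → G → ℝ) (o : G) (M : MorseGauge) (z : MorseBoundaryN d o) : Prop :=
  ∃ γ : MRayN d o, IsMorseOnN d M γ.1 univ ∧ Quot.mk _ γ = z

/-- The `M`-Morse stratum `∂^M` of the Morse boundary. -/
def stratumN (d : G → G → ℝ) (o : G) (M : MorseGauge) : Set (MorseBoundaryN d o) :=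
  {z | MorseDirN d o M z}

/-- The neighbourhood `U_{M,n}(z)` in the `M`-Morse stratum: classes of `M`-Morse rays
that `δ_M`-fellow-travel every `M`-Morse realization of `z` up to time `n`. -/
def UN (d : G → G → ℝ) (o : G) (M : MorseGauge) (n : ℕ) (z : MorseBoundaryN d o) :
    Set (MorseBoundaryN d o) :=
  {w | ∃ η : MRayN d o, Quot.mk _ η = w ∧ IsMorseOnN d M η.1 univ ∧
        ∀ ξ : MRayN d o, IsMorseOnN d M ξ.1 univ → Quot.mk _ ξ = z →
          ∀ t ≤ n, d (η.1 t) (ξ.1 t) < deltaM M}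

/-- The direct-limit topology on the Morse boundary: a set is open iff its intersection
with every stratum is open for the neighbourhood-basis topology of that stratum. -/
def morseTopologyN (d : G → G → ℝ) (o : G) : TopologicalSpace (MorseBoundaryN d o) where
  IsOpen O := ∀ M z, z ∈ O → MorseDirN d o M z → ∃ n, UN d o M n z ∩ stratumN d o M ⊆ O
  isOpen_univ := by intro M z _ _; exact ⟨0, fun w _ => trivial⟩
  isOpen_inter := by
    intro O₁ O₂ h₁ h₂ M z hz hM
    obtain ⟨n₁, hn₁⟩ := h₁ M z hz.1 hM
    obtain ⟨n₂, hn₂⟩ := h₂ M z hz.2 hM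
    refine ⟨max n₁ n₂, fun w hw => ⟨hn₁ ⟨?_, hw.2⟩, hn₂ ⟨?_, hw.2⟩⟩⟩
    · obtain ⟨η, h1, h2, h3⟩ := hw.1
      exact ⟨η, h1, h2, fun ξ a b t ht => h3 ξ a b t (ht.trans (le_max_left _ _))⟩
    · obtain ⟨η, h1, h2, h3⟩ := hw.1
      exact ⟨η, h1, h2, fun ξ a b t ht => h3 ξ a b t (ht.trans (le_max_right _ _))⟩
  isOpen_sUnion := by
    intro S hS M z hz hM
    obtain ⟨O, hO, hzO⟩ := hz
    obtain ⟨n, hn⟩ := hS O hO M z hzO hM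
    exact ⟨n, fun w hw => ⟨O, hO, hn hw⟩⟩

/-- `x ∈ G` is an `M`-Morse point: some geodesic from `o` to `x` is `M`-Morse. -/
def MorsePtN (d : G → G → ℝ) (o : G) (M : MorseGauge) (x : G) : Prop :=
  ∃ (n : ℕ) (γ : ℕ → G), γ 0 = o ∧ γ n = x ∧
    IsGeodesicOnN d γ (Iic n) ∧ IsMorseOnN d M γ (Iic n)

/-- Membership of the point `x` in the filled neighbourhood `Û_{M,k}(z)`. -/
def InFilledPtN (d : G → G → ℝ) (o : G) (M : MorseGauge) (k : ℕ)
    (z : MorseBoundaryN d o) (x : G) : Prop :=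
  ∃ (n : ℕ) (γ : ℕ → G), k ≤ n ∧ γ 0 = o ∧ γ n = x ∧
    IsGeodesicOnN d γ (Iic n) ∧ IsMorseOnN d M γ (Iic n) ∧
    ∀ ξ : MRayN d o, IsMorseOnN d M ξ.1 univ → Quot.mk _ ξ = z →
      ∀ t ≤ k, d (γ t) (ξ.1 t) < deltaM M

end NatPaths
open Monoid

section FreeProduct

variable {A B : Type*} [Group A] [Group B]

/-- A syllable viewed inside the free product `A ∗ B`. -/
def sylElem : A ⊕ B → Monoid.Coprod A B
  | Sum.inl a => Monoid.Coprod.inl a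
  | Sum.inr b => Monoid.Coprod.inr b

/-- The generating set of `A ∗ B` induced by `S_A` and `S_B`. -/
def fpGens (SA : Set A) (SB : Set B) : Set (Monoid.Coprod A B) :=
  (fun a : A => (Monoid.Coprod.inl a : Monoid.Coprod A B)) '' SA ∪
    (fun b : B => (Monoid.Coprod.inr b : Monoid.Coprod A B)) '' SB

/-- A syllable is a Morse point of its factor. -/
def MorsePtSum (dA : A → A → ℝ) (dB : B → B → ℝ) (M : MorseGauge) : A ⊕ B → Prop
  | Sum.inl a => MorsePtN dA 1 M a
  | Sum.inr b => MorsePtN dB 1 M b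

/-- A Morse direction of one of the two factors is `M`-Morse. -/
def MorseDirSum (dA : A → A → ℝ) (dB : B → B → ℝ) (M : MorseGauge) :
    MorseBoundaryN dA (1 : A) ⊕ MorseBoundaryN dB (1 : B) → Prop
  | Sum.inl z => MorseDirN dA 1 M z
  | Sum.inr z => MorseDirN dB 1 M z

/-- Conditions on an infinite syllable sequence: starts in `A`, alternates, and all
syllables except possibly the first are nontrivial. -/
def SylSeqOK (u : ℕ → A ⊕ B) : Prop :=
  (u 0).isLeft = true ∧ (∀ i, (u i).isLeft ≠ (u (i + 1)).isLeft) ∧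
    ∀ i, 1 ≤ i → u i ≠ Sum.inl (1 : A) ∧ u i ≠ Sum.inr (1 : B)

/-- Conditions on a finite syllable list: starts in `A`, alternates, and all syllables
except possibly the first are nontrivial. -/
def SylListOK (l : List (A ⊕ B)) : Prop :=
  (∀ x ∈ l.head?, x.isLeft = true) ∧ l.Chain' (fun x y => x.isLeft ≠ y.isLeft) ∧
    ∀ x ∈ l.tail, x ≠ Sum.inl (1 : A) ∧ x ≠ Sum.inr (1 : B)

/-- A combinatorial Morse geodesic of infinite type. -/
structure CombInf (dA : A → A → ℝ) (dB : B → B → ℝ) : Type _ where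
  u : ℕ → A ⊕ B
  ok : SylSeqOK u
  morse : ∃ M : MorseGauge, ∀ i, MorsePtSum dA dB M (u i)

/-- A combinatorial Morse geodesic of finite type. -/
structure CombFin (dA : A → A → ℝ) (dB : B → B → ℝ) : Type _ where
  l : List (A ⊕ B)
  z : MorseBoundaryN dA (1 : A) ⊕ MorseBoundaryN dB (1 : B)
  ok : SylListOK l
  parity : Even l.length ↔ z.isLeft = true
  morse : ∃ M : MorseGauge, (∀ x ∈ l, MorsePtSum dA dB M x) ∧ MorseDirSum dA dB M z

/-- The combinatorial Morse boundary of the free product. -/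
def CombBoundary (dA : A → A → ℝ) (dB : B → B → ℝ) : Type _ :=
  CombInf dA dB ⊕ CombFin dA dB

/-- The prefix product `v_i` of the first `i` syllables of an infinite sequence. -/
def sylProd (u : ℕ → A ⊕ B) (i : ℕ) : Monoid.Coprod A B :=
  ((List.range i).map (fun j => sylElem (u j))).prod

/-- The prefix product of the first `i` syllables of a finite list. -/
def sylProdL (l : List (A ⊕ B)) (i : ℕ) : Monoid.Coprod A B :=
  ((l.take i).map sylElem).prod

end FreeProduct

section Statement16

variable {A B : Type*} [Group A] [Group B]

/-- The ray `η` in the free product represents the infinite-type combinatorial geodesic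
`c`: it passes through all prefix points `v_i`, and between `v_i` and `v_{i+1}` stays in
the coset `v_i Γ_{factor of u_i}`. -/
def RepInf (SA : Set A) (SB : Set B) (c : CombInf (wordDist SA) (wordDist SB))
    (η : MRayN (wordDist (fpGens SA SB)) (1 : Monoid.Coprod A B)) : Prop :=
  ∃ t : ℕ → ℕ, t 0 = 0 ∧ Monotone t ∧
    (∀ i, η.1 (t i) = sylProd c.u i) ∧
    ∀ i s, t i ≤ s → s ≤ t (i + 1) →
      ∃ x : A ⊕ B, x.isLeft = (c.u i).isLeft ∧ η.1 s = sylProd c.u i * sylElem x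

/-- The ray `η` represents the finite-type combinatorial geodesic `c`: it passes through
the prefix points, stays in the appropriate cosets in between, and its tail is the
translate by `v_n` of a ray in the factor realizing the Morse direction `c.z`. -/
def RepFin (SA : Set A) (SB : Set B) (c : CombFin (wordDist SA) (wordDist SB))
    (η : MRayN (wordDist (fpGens SA SB)) (1 : Monoid.Coprod A B)) : Prop :=
  ∃ t : ℕ → ℕ, t 0 = 0 ∧ Monotone t ∧
    (∀ i ≤ c.l.length, η.1 (t i) = sylProdL c.l i) ∧
    (∀ (i : ℕ) (hi : i < c.l.length), ∀ s, t i ≤ s → s ≤ t (i + 1) →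
      ∃ x : A ⊕ B, x.isLeft = (c.l.get ⟨i, hi⟩).isLeft ∧
        η.1 s = sylProdL c.l i * sylElem x) ∧
    (match c.z with
      | Sum.inl zA => ∃ ζ : MRayN (wordDist SA) (1 : A), Quot.mk _ ζ = zA ∧
          ∀ s, η.1 (t c.l.length + s) =
            sylProdL c.l c.l.length * Monoid.Coprod.inl (ζ.1 s)
      | Sum.inr zB => ∃ ζ : MRayN (wordDist SB) (1 : B), Quot.mk _ ζ = zB ∧
          ∀ s, η.1 (t c.l.length + s) =
            sylProdL c.l c.l.length * Monoid.Coprod.inr (ζ.1 s))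

/-- `η` represents the combinatorial Morse geodesic `a`. -/
def Represents (SA : Set A) (SB : Set B)
    (a : CombBoundary (wordDist SA) (wordDist SB))
    (η : MRayN (wordDist (fpGens SA SB)) (1 : Monoid.Coprod A B)) : Prop :=
  match a with
  | Sum.inl c => RepInf SA SB c η
  | Sum.inr c => RepFin SA SB c η

/-- Abstract tree-like structure of a free product of two subgroups. -/
structure TreeLike {G : Type*} [Group G] (H : Bool → Subgroup G) (ρ : Bool → G → G) : Prop where
  mem : ∀ σ g, ρ σ g ∈ H σ
  equi : ∀ σ h g, h ∈ H σ → ρ σ (h * g) = h * ρ σ g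
  one : ∀ σ, ρ σ 1 = 1
  excl : ∀ σ g, ρ σ g ≠ 1 → ρ (!σ) g = 1
  triv : ∀ σ g, ρ σ g = 1 → ρ (!σ) g = 1 → g = 1
  step : ∀ σ τ g s, s ∈ H τ → ρ σ (g * s) ≠ ρ σ g → g ∈ H σ

namespace TreeLike

variable {G : Type*} [Group G] {H : Bool → Subgroup G} {ρ : Bool → G → G}

theorem self (T : TreeLike H ρ) {σ : Bool} {h : G} (hh : h ∈ H σ) : ρ σ h = h := by
  have := T.equi σ h 1 hh
  simpa [T.one] using this

theorem other (T : TreeLike H ρ) {σ : Bool} {h : G} (hh : h ∈ H σ) : ρ (!σ) h = 1 := by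
  by_cases h1 : h = 1
  · rw [h1, T.one]
  · exact T.excl σ h (by rwa [T.self hh])

theorem disj (T : TreeLike H ρ) {σ : Bool} {h : G} (hh : h ∈ H σ) (hh' : h ∈ H (!σ)) : h = 1 := by
  rw [← T.other hh, T.self hh']

/-- Constructor from a reduced-word induction principle. -/
theorem mk' (mem : ∀ σ g, ρ σ g ∈ H σ)
    (equi : ∀ σ h g, h ∈ H σ → ρ σ (h * g) = h * ρ σ g)
    (one : ∀ σ, ρ σ 1 = 1)
    (excl : ∀ σ g, ρ σ g ≠ 1 → ρ (!σ) g = 1)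
    (ind : ∀ P : G → Prop, P 1 →
      (∀ σ x g, x ∈ H σ → x ≠ 1 → ρ σ g = 1 → P g → P (x * g)) → ∀ g, P g) :
    TreeLike H ρ := by
  have self : ∀ σ h, h ∈ H σ → ρ σ h = h := by
    intro σ h hh
    have := equi σ h 1 hh
    simpa [one] using this
  have other : ∀ σ h, h ∈ H σ → ρ (!σ) h = 1 := by
    intro σ h hh
    by_cases h1 : h = 1
    · rw [h1, one]
    · exact excl σ h (by rwa [self σ h hh])
  have triv : ∀ σ g, ρ σ g = 1 → ρ (!σ) g = 1 → g = 1 := by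
    intro σ g
    refine ind (fun g => ρ σ g = 1 → ρ (!σ) g = 1 → g = 1) (fun _ _ => rfl) ?_ g
    intro τ x g hx hx1 hg _ h1 h2
    exfalso
    have hτ : ρ τ (x * g) = x := by rw [equi τ x g hx, hg, mul_one]
    have : ρ τ (x * g) = 1 := by
      cases σ <;> cases τ <;> first | exact h1 | exact h2
    exact hx1 (hτ.symm.trans this)
  refine ⟨mem, equi, one, excl, triv, ?_⟩
  intro σ τ g s hs
  have key : ∀ g, ∀ σ, ρ σ (g * s) = ρ σ g ∨ (g ∈ H σ ∧ s ∈ H σ) := by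
    refine ind _ ?_ ?_
    · intro σ
      by_cases h : σ = τ
      · subst h; exact Or.inr ⟨one_mem _, hs⟩
      · left
        have : σ = !τ := Bool.eq_not_of_ne h
        rw [one_mul, one, this, other τ s hs]
    · intro κ x g hx hx1 hg ih σ
      by_cases h : σ = κ
      · subst h
        rcases ih σ with h | h
        · left; rw [mul_assoc, equi σ x _ hx, equi σ x _ hx, h]
        · right; exact ⟨mul_mem hx h.1, h.2⟩
      · have hσ : σ = !κ := Bool.eq_not_of_ne h
        left
        have e1 : ρ σ (x * g) = 1 := by
          rw [hσ]; apply excl; rw [equi κ x _ hx, hg, mul_one]; exact hx1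
        rw [e1]
        rcases ih κ with h | h
        · rw [hσ]; apply excl; rw [mul_assoc, equi κ x _ hx, h, hg, mul_one]; exact hx1
        · rw [hσ]; exact other κ _ (mul_mem (mul_mem hx h.1) h.2)
  intro hne
  exact ((key g σ).resolve_left hne).1

end TreeLike

section CoprodModel

variable (A B : Type) [Group A] [Group B]

/-- The two factors as a family. -/
def facFam : Bool → Type := fun b => match b with
  | true => A
  | false => B

instance facFamGroup : ∀ b, Group (facFam A B b)
  | true => (inferInstance : Group A)
  | false => (inferInstance : Group B)

/-- The inclusion of the factors. -/
def facInc : ∀ b, facFam A B b →* Monoid.Coprod A B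
  | true => (Monoid.Coprod.inl : A →* Monoid.Coprod A B)
  | false => (Monoid.Coprod.inr : B →* Monoid.Coprod A B)

/-- The map to the indexed free product. -/
def toCI : Monoid.Coprod A B →* Monoid.CoprodI (facFam A B) :=
  Monoid.Coprod.lift (Monoid.CoprodI.of (i := true) : facFam A B true →* _)
    (Monoid.CoprodI.of (i := false) : facFam A B false →* _)

/-- The inverse map. -/
def ofCI : Monoid.CoprodI (facFam A B) →* Monoid.Coprod A B :=
  Monoid.CoprodI.lift (facInc A B)

theorem toCI_facInc (b : Bool) (x : facFam A B b) :
    toCI A B (facInc A B b x) = Monoid.CoprodI.of x := by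
  cases b
  · exact Monoid.Coprod.lift_apply_inr _ _ _
  · exact Monoid.Coprod.lift_apply_inl _ _ _

theorem ofCI_toCI (g : Monoid.Coprod A B) : ofCI A B (toCI A B g) = g := by
  have : (ofCI A B).comp (toCI A B) = MonoidHom.id _ := by
    apply Monoid.Coprod.hom_ext
    · ext x
      have h := toCI_facInc A B true x
      change ofCI A B (toCI A B (facInc A B true x)) = facInc A B true x
      rw [h]; exact Monoid.CoprodI.lift_of (facInc A B) _
    · ext x
      have h := toCI_facInc A B false x
      change ofCI A B (toCI A B (facInc A B false x)) = facInc A B false x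
      rw [h]; exact Monoid.CoprodI.lift_of (facInc A B) _
  exact DFunLike.congr_fun this g

/-- The factor subgroups. -/
def facH (b : Bool) : Subgroup (Monoid.Coprod A B) := (facInc A B b).range

open Classical in
/-- The reduced word of an element. -/
noncomputable def facWord (g : Monoid.Coprod A B) : Monoid.CoprodI.Word (facFam A B) :=
  toCI A B g • Monoid.CoprodI.Word.empty

open Classical in
/-- The first syllable retraction. -/
noncomputable def facRho (b : Bool) (g : Monoid.Coprod A B) : Monoid.Coprod A B :=
  facInc A B b (Monoid.CoprodI.Word.equivPair b (facWord A B g)).head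

open Classical in
theorem facTree : TreeLike (facH A B) (facRho A B) := by
  have idx : ∀ (b : Bool) g, facRho A B b g ≠ 1 → (facWord A B g).fstIdx = some b := by
    intro b g h
    by_contra hc
    apply h
    unfold facRho
    rw [Monoid.CoprodI.Word.equivPair_eq_of_fstIdx_ne hc]
    exact map_one _
  have rho_of : ∀ (b : Bool) g, (facWord A B g).fstIdx ≠ some b → facRho A B b g = 1 := by
    intro b g h
    by_contra hc
    exact h (idx b g hc)
  have inj : ∀ b, Function.Injective (facInc A B b) := by
    intro b
    cases b
    · exact Monoid.Coprod.inr_injective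
    · exact Monoid.Coprod.inl_injective
  refine TreeLike.mk' (fun σ g => ⟨_, rfl⟩) ?_ ?_ ?_ ?_
  · rintro σ _ g ⟨x, rfl⟩
    unfold facRho facWord
    rw [map_mul, toCI_facInc, mul_smul, Monoid.CoprodI.Word.equivPair_smul_same]
    exact map_mul _ _ _
  · intro σ
    apply rho_of
    unfold facWord
    rw [map_one, one_smul]
    simp [Monoid.CoprodI.Word.fstIdx, Monoid.CoprodI.Word.empty]
  · intro σ g h
    apply rho_of
    rw [idx σ g h]
    simp
  · intro P h1 hs g
    have main : ∀ w : Monoid.CoprodI.Word (facFam A B), ∀ g, toCI A B g = w.prod → P g := by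
      intro w
      induction w using Monoid.CoprodI.Word.consRecOn with
      | empty =>
        intro g hg
        have := congrArg (ofCI A B) hg
        rw [ofCI_toCI, Monoid.CoprodI.Word.prod_empty, map_one] at this
        rw [this]; exact h1
      | cons i m w hw hm ih =>
        intro g hg
        rw [Monoid.CoprodI.Word.prod_cons] at hg
        have hg' : toCI A B ((facInc A B i m)⁻¹ * g) = w.prod := by
          rw [map_mul, map_inv, toCI_facInc, hg, inv_mul_cancel_left]
        have := hs i (facInc A B i m) ((facInc A B i m)⁻¹ * g) ⟨m, rfl⟩ ?_ ?_ (ih _ hg')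
        · simpa using this
        · intro h
          exact hm (inj i (h.trans (map_one _).symm))
        · apply rho_of
          unfold facWord
          rw [hg']
          have := (Monoid.CoprodI.Word.equiv (M := facFam A B)).right_inv w
          change w.prod • Monoid.CoprodI.Word.empty = w at this
          rw [this]; exact hw
    refine main (Monoid.CoprodI.Word.equiv (toCI A B g)) g ?_
    exact ((Monoid.CoprodI.Word.equiv (M := facFam A B)).left_inv _).symm

end CoprodModel

section WordMetric

variable {G : Type*} [Group G] {S : Set G}

theorem isWordOver_append {l l' : List G} (h : IsWordOver S l) (h' : IsWordOver S l') :
    IsWordOver S (l ++ l') := by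
  intro x hx
  rcases List.mem_append.1 hx with hx | hx
  · exact h x hx
  · exact h' x hx

theorem exists_wordOver (hS : Subgroup.closure S = ⊤) (g : G) :
    ∃ l : List G, IsWordOver S l ∧ l.prod = g := by
  have hg : g ∈ Subgroup.closure S := by rw [hS]; trivial
  induction hg using Subgroup.closure_induction with
  | mem x hx => exact ⟨[x], by intro y hy; simp at hy; subst hy; exact Or.inl hx, by simp⟩
  | one => exact ⟨[], by intro y hy; simp at hy, by simp⟩
  | mul x y _ _ hx hy =>
    obtain ⟨l, h1, h2⟩ := hx
    obtain ⟨l', h1', h2'⟩ := hy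
    exact ⟨l ++ l', isWordOver_append h1 h1', by simp [h2, h2']⟩
  | inv x _ hx =>
    obtain ⟨l, h1, h2⟩ := hx
    refine ⟨(l.map (fun y => y⁻¹)).reverse, ?_, ?_⟩
    · intro y hy
      simp only [List.mem_reverse, List.mem_map] at hy
      obtain ⟨z, hz, rfl⟩ := hy
      rcases h1 z hz with h | h
      · right; simpa using h
      · left; exact h
    · rw [← List.prod_inv_reverse, h2]

theorem wd_le {x y : G} {l : List G} (hl : IsWordOver S l) (hp : l.prod = x⁻¹ * y) :
    wordDist S x y ≤ l.length := by
  unfold wordDist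
  apply csInf_le
  · refine ⟨0, ?_⟩
    rintro r ⟨l, _, _, rfl⟩
    positivity
  · exact ⟨l, hl, hp, rfl⟩

theorem wd_exists (hS : Subgroup.closure S = ⊤) (x y : G) :
    ∃ l : List G, IsWordOver S l ∧ l.prod = x⁻¹ * y ∧ wordDist S x y = l.length := by
  classical
  have hex : ∃ n : ℕ, ∃ l : List G, IsWordOver S l ∧ l.prod = x⁻¹ * y ∧ l.length = n := by
    obtain ⟨l, h1, h2⟩ := exists_wordOver hS (x⁻¹ * y)
    exact ⟨_, l, h1, h2, rfl⟩
  obtain ⟨l, h1, h2, h3⟩ := Nat.find_spec hex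
  refine ⟨l, h1, h2, le_antisymm (wd_le h1 h2) ?_⟩
  unfold wordDist
  refine le_csInf ⟨(l.length : ℝ), l, h1, h2, rfl⟩ ?_
  rintro r ⟨l', h1', h2', rfl⟩
  have := Nat.find_min' hex ⟨l', h1', h2', rfl⟩
  rw [h3]
  exact_mod_cast this

/-- The metric properties we use. -/
structure PM (d : G → G → ℝ) : Prop where
  self : ∀ x, d x x = 0
  comm : ∀ x y, d x y = d y x
  tri : ∀ x y z, d x z ≤ d x y + d y z
  left : ∀ g x y, d (g * x) (g * y) = d x y
  eq_of : ∀ x y, d x y = 0 → x = y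

theorem PM.nonneg {d : G → G → ℝ} (P : PM d) (x y : G) : 0 ≤ d x y := by
  have h1 := P.tri x y x
  rw [P.self, P.comm y x] at h1
  linarith

theorem wd_comm_le (hS : Subgroup.closure S = ⊤) (x y : G) : wordDist S x y ≤ wordDist S y x := by
  obtain ⟨l, h1, h2, h3⟩ := wd_exists hS y x
  rw [h3]
  have : ((l.map (fun y => y⁻¹)).reverse).length = l.length := by simp
  rw [← this]
  apply wd_le
  · intro y hy
    simp only [List.mem_reverse, List.mem_map] at hy
    obtain ⟨z, hz, rfl⟩ := hy
    rcases h1 z hz with h | h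
    · right; simpa using h
    · left; exact h
  · rw [← List.prod_inv_reverse, h2]; group

theorem wd_PM (hS : Subgroup.closure S = ⊤) : PM (wordDist S) where
  self x := by
    apply le_antisymm
    · have := wd_le (S := S) (x := x) (y := x) (l := []) (by intro y hy; simp at hy) (by simp)
      simpa using this
    · obtain ⟨l, h1, h2, h3⟩ := wd_exists hS x x
      rw [h3]; positivity
  comm x y := le_antisymm (wd_comm_le hS x y) (wd_comm_le hS y x)
  tri x y z := by
    obtain ⟨l, h1, h2, h3⟩ := wd_exists hS x y
    obtain ⟨l', h1', h2', h3'⟩ := wd_exists hS y z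
    rw [h3, h3']
    have : ((l ++ l').length : ℝ) = l.length + l'.length := by simp
    rw [← this]
    apply wd_le (isWordOver_append h1 h1')
    rw [List.prod_append, h2, h2']; group
  left g x y := by
    unfold wordDist
    have : (g * x)⁻¹ * (g * y) = x⁻¹ * y := by group
    rw [this]
  eq_of x y h := by
    obtain ⟨l, h1, h2, h3⟩ := wd_exists hS x y
    rw [h] at h3
    have : l = [] := by
      have : l.length = 0 := by exact_mod_cast h3.symm
      exact List.length_eq_zero_iff.1 this
    subst this
    simp at h2
    have := congrArg (fun z => x * z) h2
    simpa using this

/-- The key property of the nearest point projections. -/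
def StarP (d : G → G → ℝ) (π : G → G) : Prop :=
  ∀ x y, π x ≠ π y → d x y = d x (π x) + d (π x) (π y) + d (π y) y

theorem StarP.lip {d : G → G → ℝ} (P : PM d) {π : G → G} (h : StarP d π) (x y : G) :
    d (π x) (π y) ≤ d x y := by
  by_cases hxy : π x = π y
  · rw [hxy, P.self]; exact P.nonneg _ _
  · rw [h x y hxy]
    linarith [P.nonneg x (π x), P.nonneg (π y) y]

/-- A tree-like structure with an adapted generating set. -/
structure Geo (H : Bool → Subgroup G) (ρ : Bool → G → G) (S : Set G) : Prop where
  tree : TreeLike H ρ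
  top : Subgroup.closure S = ⊤
  gen : ∀ s, (s ∈ S ∨ s⁻¹ ∈ S) → ∃ τ, s ∈ H τ

/-- The projection to the coset `v H`. -/
def pj (ρ : Bool → G → G) (σ : Bool) (v x : G) : G := v * ρ σ (v⁻¹ * x)

variable {H : Bool → Subgroup G} {ρ : Bool → G → G}

theorem Geo.split (Q : Geo H ρ S) (σ : Bool) (l : List G) (hl : IsWordOver S l) :
    ∀ x, ρ σ x ≠ ρ σ (x * l.prod) → ∃ l1 l2, l = l1 ++ l2 ∧ x * l1.prod = ρ σ x := by
  induction l with
  | nil => intro x h; simp at h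
  | cons s l ih =>
    intro x h
    by_cases hs : ρ σ (x * s) = ρ σ x
    · obtain ⟨l1, l2, h1, h2⟩ := ih (fun y hy => hl y (List.mem_cons_of_mem _ hy)) (x * s) (by
        rw [hs, mul_assoc, ← List.prod_cons]; exact h)
      refine ⟨s :: l1, l2, by rw [h1]; rfl, ?_⟩
      rw [List.prod_cons, ← mul_assoc, h2, hs]
    · obtain ⟨τ, hτ⟩ := Q.gen s (hl s List.mem_cons_self)
      have := Q.tree.step σ τ x s hτ hs
      exact ⟨[], s :: l, rfl, by simp [Q.tree.self this]⟩

theorem Geo.star_half (Q : Geo H ρ S) (σ : Bool) (x y : G) (h : ρ σ x ≠ ρ σ y) :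
    wordDist S x (ρ σ x) + wordDist S (ρ σ x) y ≤ wordDist S x y := by
  obtain ⟨l, h1, h2, h3⟩ := wd_exists Q.top x y
  obtain ⟨l1, l2, e, h4⟩ := Q.split σ l h1 x (by rw [h2]; simpa using h)
  rw [h3, e]
  have a1 : wordDist S x (ρ σ x) ≤ l1.length := by
    apply wd_le
    · intro z hz; exact h1 z (by rw [e]; exact List.mem_append_left _ hz)
    · rw [← h4]; group
  have a2 : wordDist S (ρ σ x) y ≤ l2.length := by
    apply wd_le
    · intro z hz; exact h1 z (by rw [e]; exact List.mem_append_right _ hz)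
    · rw [e, List.prod_append] at h2
      rw [← h4, mul_inv_rev, mul_assoc, ← h2]; group
  rw [List.length_append]; push_cast; linarith

theorem Geo.star_rho (Q : Geo H ρ S) (σ : Bool) : StarP (wordDist S) (ρ σ) := by
  intro x y h
  have P := wd_PM Q.top
  have h1 := Q.star_half σ x y h
  have e : ρ σ (ρ σ x) = ρ σ x := Q.tree.self (Q.tree.mem σ x)
  have h2 := Q.star_half σ y (ρ σ x) (by rw [e]; exact h.symm)
  rw [P.comm y (ρ σ x), P.comm y (ρ σ y), P.comm (ρ σ y) (ρ σ x)] at h2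
  have h3 := P.tri x (ρ σ x) y
  have h4 := P.tri (ρ σ x) (ρ σ y) y
  linarith

theorem Geo.star (Q : Geo H ρ S) (σ : Bool) (v : G) : StarP (wordDist S) (pj ρ σ v) := by
  intro x y h
  have P := wd_PM Q.top
  have h0 : ρ σ (v⁻¹ * x) ≠ ρ σ (v⁻¹ * y) := by
    intro e; exact h (by unfold pj; rw [e])
  have h1 := Q.star_rho σ _ _ h0
  rw [P.left] at h1
  have e1 : ∀ z w, wordDist S (v⁻¹ * z) w = wordDist S z (v * w) := by
    intro z w
    rw [← P.left v]; simp
  have e2 : ∀ z w, wordDist S w (v⁻¹ * z) = wordDist S (v * w) z := by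
    intro z w
    rw [← P.left v]; simp
  rw [e1, e2] at h1
  unfold pj
  rw [P.left, h1]

theorem Geo.letter (Q : Geo H ρ S) {x y : G} (h : wordDist S x y = 1) : ∃ τ, x⁻¹ * y ∈ H τ := by
  obtain ⟨l, h1, h2, h3⟩ := wd_exists Q.top x y
  rw [h] at h3
  have : l.length = 1 := by exact_mod_cast h3.symm
  obtain ⟨s, rfl⟩ := List.length_eq_one_iff.1 this
  simp at h2
  rw [← h2]
  exact Q.gen s (h1 s (by simp))

end WordMetric

section MorseLemma

variable {G : Type*} [Group G]

theorem disc_up (P : ℕ → Prop) {j i : ℕ} (hji : j ≤ i) (hj : ¬ P j) (hi : P i) :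
    ∃ k, j ≤ k ∧ k < i ∧ ¬ P k ∧ P (k + 1) := by
  induction i, hji using Nat.le_induction with
  | base => exact absurd hi hj
  | succ m hm ih =>
    by_cases h : P m
    · obtain ⟨k, a, b, c, e⟩ := ih h
      exact ⟨k, a, by omega, c, e⟩
    · exact ⟨m, hm, by omega, h, hi⟩

/-- Excursion constant. -/
noncomputable def excR (L e : ℝ) : ℝ := L * (L * (2 * (L + e) + e)) + e + (L + e)

theorem excursion {d : G → G → ℝ} (P : PM d) {π : G → G} (hπ : StarP d π) {L e : ℝ} (hL : 1 ≤ L)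
    (he : 0 ≤ e) {η : ℕ → G} {a b i : ℕ} (hq : IsQGOnN d L e η (Icc a b)) (hi : i ∈ Icc a b)
    (hl : π (η a) = π (η i) → d (η a) (π (η i)) ≤ L + e)
    (hr : π (η b) = π (η i) → d (η b) (π (η i)) ≤ L + e) :
    d (η i) (π (η i)) ≤ excR L e := by
  obtain ⟨ha, hb⟩ := hi
  have stepd : ∀ k, a ≤ k → k + 1 ≤ b → d (η k) (η (k + 1)) ≤ L + e := by
    intro k h1 h2
    have := (hq k ⟨h1, by omega⟩ (k + 1) ⟨by omega, h2⟩).2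
    have e1 : |(k : ℝ) - ((k + 1 : ℕ) : ℝ)| = 1 := by push_cast; rw [abs_sub_comm]; simp
    rw [e1] at this; linarith
  have left : ∃ i0, a ≤ i0 ∧ i0 ≤ i ∧ d (η i0) (π (η i)) ≤ L + e := by
    by_cases h : π (η a) = π (η i)
    · exact ⟨a, le_rfl, ha, hl h⟩
    · obtain ⟨k, h1, h2, h3, h4⟩ := disc_up (fun k => π (η k) = π (η i)) ha h rfl
      refine ⟨k + 1, by omega, by omega, ?_⟩
      have s1 := stepd k h1 (by omega)
      have s2 := hπ (η k) (η (k + 1)) (by rw [h4]; exact h3)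
      rw [h4, P.comm (π (η i))  (η (k+1))] at s2
      linarith [P.nonneg (η k) (π (η k)), P.nonneg (π (η k)) (π (η i))]
  have right : ∃ i1, i ≤ i1 ∧ i1 ≤ b ∧ d (η i1) (π (η i)) ≤ L + e := by
    by_cases h : π (η b) = π (η i)
    · exact ⟨b, hb, le_rfl, hr h⟩
    · obtain ⟨k, h1, h2, h3, h4⟩ := disc_up (fun k => π (η k) ≠ π (η i)) hb (by simp) h
      simp only [not_not] at h3
      refine ⟨k, by omega, by omega, ?_⟩
      have s1 := stepd k (by omega) (by omega)
      have s2 := hπ (η k) (η (k + 1)) (by rw [h3]; exact h4.symm)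
      rw [h3] at s2
      linarith [P.nonneg (π (η (k+1))) (η (k+1)), P.nonneg (π (η i)) (π (η (k+1)))]
  obtain ⟨i0, h1, h2, h3⟩ := left
  obtain ⟨i1, h4, h5, h6⟩ := right
  have q1 := (hq i0 ⟨h1, by omega⟩ i1 ⟨by omega, h5⟩).1
  have q2 := (hq i ⟨ha, hb⟩ i0 ⟨h1, by omega⟩).2
  have t1 := P.tri (η i0) (π (η i)) (η i1)
  rw [P.comm (π (η i)) (η i1)] at t1
  have t2 := P.tri (η i) (η i0) (π (η i))
  have c1 : (i0 : ℝ) ≤ i := by exact_mod_cast h2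
  have c2 : (i : ℝ) ≤ i1 := by exact_mod_cast h4
  rw [abs_sub_comm, abs_of_nonneg (by linarith)] at q1
  rw [abs_of_nonneg (by linarith)] at q2
  have hL0 : 0 < L := by linarith
  have q3 : (i1 : ℝ) - i0 ≤ L * (2 * (L + e) + e) := by
    have : 1 / L * ((i1 : ℝ) - i0) ≤ 2 * (L + e) + e := by linarith
    rw [one_div, inv_mul_le_iff₀ hL0] at this
    exact this
  have q4 : L * ((i : ℝ) - i0) ≤ L * (L * (2 * (L + e) + e)) := by
    apply mul_le_mul_of_nonneg_left _ hL0.le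
    linarith
  unfold excR
  linarith

/-- Morse property relative to paths in a subset. -/
def RelMorse (d : G → G → ℝ) (H : Set G) (M : MorseGauge) (γ : ℕ → G) (s : Set ℕ) : Prop :=
  ∀ L e, 1 ≤ L → 0 ≤ e → ∀ (η : ℕ → G) (a b : ℕ), a ≤ b → (∀ i ∈ Icc a b, η i ∈ H) →
    IsQGOnN d L e η (Icc a b) → η a ∈ γ '' s → η b ∈ γ '' s →
    ∀ i ∈ Icc a b, ∃ j ∈ s, d (η i) (γ j) ≤ M L e

/-- The gauge of the concatenated ray. -/
noncomputable def bigM (M : MorseGauge) : MorseGauge := fun L e =>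
  excR L e + |M L (e + 2 * excR L e)|

theorem morse_of_good {d : G → G → ℝ} (P : PM d) {M : MorseGauge} {γ : ℕ → G}
    (hx : ∀ x, ∃ (π : G → G) (Sg : Set ℕ), StarP d π ∧
      (∀ s, π (γ s) ∈ γ '' Sg) ∧
      (∀ s, π (γ s) = π x → π (γ s) = γ s ∨ x = π x) ∧ RelMorse d (range π) M γ Sg) :
    IsMorseOnN d (bigM M) γ univ := by
  intro L e hL he η a b hab hq ⟨sa, _, hsa⟩ ⟨sb, _, hsb⟩ i hi
  obtain ⟨π, Sg, hπ, hS, hg, hm⟩ := hx (η i)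
  have hR : 0 ≤ L + e := by linarith
  have hRR : 0 ≤ excR L e := by unfold excR; positivity
  have hM := abs_nonneg (M L (e + 2 * excR L e))
  have hM' := le_abs_self (M L (e + 2 * excR L e))
  have hd : d (η i) (π (η i)) ≤ excR L e := by
    by_cases hfix : η i = π (η i)
    · rw [← hfix, P.self]; exact hRR
    · apply excursion P hπ hL he hq hi
      · intro h
        rw [← hsa] at h
        rw [← h, (hg sa h).resolve_right hfix, ← hsa, P.self]
        exact hR
      · intro h
        rw [← hsb] at h
        rw [← h, (hg sb h).resolve_right hfix, ← hsb, P.self]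
        exact hR
  by_cases hw : π (η i) ∈ γ '' Sg
  · obtain ⟨j, hj, hj'⟩ := hw
    refine ⟨j, trivial, ?_⟩
    rw [hj']
    unfold bigM; linarith
  · have hα : π (η a) ∈ γ '' Sg := by rw [← hsa]; exact hS sa
    have hβ : π (η b) ∈ γ '' Sg := by rw [← hsb]; exact hS sb
    have stepd : ∀ k, a ≤ k → k + 1 ≤ b → d (η k) (η (k + 1)) ≤ L + e := by
      intro k h1 h2
      have := (hq k ⟨h1, by omega⟩ (k + 1) ⟨by omega, h2⟩).2
      have e1 : |(k : ℝ) - ((k + 1 : ℕ) : ℝ)| = 1 := by push_cast; rw [abs_sub_comm]; simp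
      rw [e1] at this; linarith
    obtain ⟨k, k1, k2, k3, k4⟩ := disc_up (fun k => π (η k) ≠ π (η a)) hi.1 (by simp)
      (by intro h; exact hw (h ▸ hα))
    obtain ⟨m, m1, m2, m3, m4⟩ := disc_up (fun k => π (η k) = π (η b)) hi.2
      (by intro h; exact hw (h ▸ hβ)) rfl
    simp only [not_not] at k3
    have ib := hi.2
    have dk : d (η k) (π (η k)) ≤ L + e := by
      have s1 := stepd k k1 (by omega)
      have s2 := hπ (η k) (η (k + 1)) (by rw [k3]; exact k4.symm)
      linarith [P.nonneg (π (η (k+1))) (η (k+1)), P.nonneg (π (η k)) (π (η (k+1)))]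
    have dm : d (η (m + 1)) (π (η (m + 1))) ≤ L + e := by
      have s1 := stepd m (by omega) (by omega)
      have s2 := hπ (η m) (η (m + 1)) (by rw [m4]; exact m3)
      rw [P.comm (π (η (m+1)))  (η (m+1))] at s2
      linarith [P.nonneg (η m) (π (η m)), P.nonneg (π (η m)) (π (η (m + 1)))]
    have hq' : IsQGOnN d L e η (Icc k (m + 1)) := by
      intro x hx y hy
      obtain ⟨x1, x2⟩ := hx
      obtain ⟨y1, y2⟩ := hy
      exact hq x ⟨by omega, by omega⟩ y ⟨by omega, by omega⟩
    have hall : ∀ j ∈ Icc k (m + 1), d (η j) (π (η j)) ≤ excR L e := by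
      intro j hj
      apply excursion P hπ hL he hq' hj
      · intro h; rw [← h]; exact dk
      · intro h; rw [← h]; exact dm
    have hqπ : IsQGOnN d L (e + 2 * excR L e) (fun j => π (η j)) (Icc k (m + 1)) := by
      intro x hx y hy
      have u := hq' x hx y hy
      have a1 := hall x hx
      have a2 := hall y hy
      have t1 := P.tri (η x) (π (η x)) (η y)
      have t2 := P.tri (π (η x)) (π (η y)) (η y)
      have t3 := hπ.lip P (η x) (η y)
      rw [P.comm (π (η y)) (η y)] at t2
      constructor
      · linarith [u.1]
      · linarith [u.2]
    obtain ⟨j, hj, hj'⟩ := hm L (e + 2 * excR L e) hL (by linarith) (fun j => π (η j)) k (m + 1)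
      (by omega) (fun j _ => ⟨_, rfl⟩) hqπ (by rw [k3]; exact hα) (by rw [m4]; exact hβ) i
      ⟨by omega, by omega⟩
    refine ⟨j, trivial, ?_⟩
    have t := P.tri (η i) (π (η i)) (γ j)
    unfold bigM
    linarith

end MorseLemma

section Comb

variable {G : Type*} [Group G] {S : Set G} {H : Bool → Subgroup G} {ρ : Bool → G → G}

/-- Parity: the factor containing the `i`-th syllable. -/
def par : ℕ → Bool
  | 0 => true
  | n + 1 => !par n

/-- Prefix products. -/
def vv (g : ℕ → G) : ℕ → G
  | 0 => 1
  | n + 1 => vv g n * g n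

/-- Admissible syllable sequences. -/
structure SynOK (H : Bool → Subgroup G) (g : ℕ → G) (N : ℕ∞) : Prop where
  mem : ∀ i : ℕ, (i : ℕ∞) < N → g i ∈ H (par i)
  ne : ∀ i : ℕ, 1 ≤ i → (i : ℕ∞) < N → g i ≠ 1

/-- The `k`-th coset. -/
def Cs (H : Bool → Subgroup G) (g : ℕ → G) (k : ℕ) : Set G := {x | (vv g k)⁻¹ * x ∈ H (par k)}

/-- The projection to the `k`-th coset. -/
def PJ (ρ : Bool → G → G) (g : ℕ → G) (k : ℕ) (x : G) : G := pj ρ (par k) (vv g k) x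

theorem vv_mem_Cs (g : ℕ → G) (k : ℕ) : vv g k ∈ Cs H g k := by
  simp [Cs, one_mem]

theorem vv_succ_mem_Cs {g : ℕ → G} {N : ℕ∞} (ok : SynOK H g N) {k : ℕ} (hk : (k : ℕ∞) < N) :
    vv g (k + 1) ∈ Cs H g k := by
  simp only [Cs, mem_ofPred_eq, vv, inv_mul_cancel_left]
  exact ok.mem k hk

theorem vv_inv_succ (g : ℕ → G) (k : ℕ) (x : G) :
    (vv g (k + 1))⁻¹ * x = (g k)⁻¹ * ((vv g k)⁻¹ * x) := by
  simp [vv, mul_assoc]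

theorem vv_inv_eq (g : ℕ → G) (k : ℕ) (x : G) :
    (vv g k)⁻¹ * x = g k * ((vv g (k + 1))⁻¹ * x) := by
  simp [vv, mul_assoc]

theorem PJ_range (T : TreeLike H ρ) (g : ℕ → G) (k : ℕ) (x : G) : PJ ρ g k x ∈ Cs H g k := by
  simp only [PJ, pj, Cs, mem_ofPred_eq, inv_mul_cancel_left]
  exact T.mem _ _

theorem PJ_self (T : TreeLike H ρ) {g : ℕ → G} {k : ℕ} {x : G} (hx : x ∈ Cs H g k) :
    PJ ρ g k x = x := by
  unfold PJ pj
  rw [T.self hx, mul_inv_cancel_left]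

theorem lt_of_succ_le {k : ℕ} {N : ℕ∞} (h : ((k + 1 : ℕ) : ℕ∞) ≤ N) : (k : ℕ∞) < N :=
  lt_of_lt_of_le (by exact_mod_cast Nat.lt_succ_self k) h

theorem succ_le_of_lt' {k : ℕ} {N : ℕ∞} (h : (k : ℕ∞) < N) : ((k + 1 : ℕ) : ℕ∞) ≤ N := by
  have := Order.add_one_le_of_lt h
  exact_mod_cast this

theorem lt_of_lt_le' {j k : ℕ} {N : ℕ∞} (hjk : j < k) (h : (k : ℕ∞) ≤ N) : (j : ℕ∞) < N :=
  lt_of_lt_of_le (by exact_mod_cast hjk) h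

theorem PJ_lt (T : TreeLike H ρ) {g : ℕ → G} {N : ℕ∞} (ok : SynOK H g N) {j k : ℕ} (hjk : j < k)
    (hk : (k : ℕ∞) ≤ N) {x : G} (hx : x ∈ Cs H g j) : PJ ρ g k x = vv g k := by
  have key : ρ (par k) ((vv g k)⁻¹ * x) = 1 := by
    induction k, hjk using Nat.le_induction with
    | base =>
      rw [vv_inv_succ]
      exact T.other (mul_mem (inv_mem (ok.mem j (lt_of_succ_le hk))) hx)
    | succ m hm ih =>
      have hmN : (m : ℕ∞) < N := lt_of_succ_le hk
      have := ih hmN.le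
      apply T.excl (par m)
      rw [vv_inv_succ, T.equi _ _ _ (inv_mem (ok.mem m hmN)), this, mul_one]
      simpa using ok.ne m (by omega) hmN
  unfold PJ pj
  rw [key, mul_one]

theorem PJ_gt (T : TreeLike H ρ) {g : ℕ → G} {N : ℕ∞} (ok : SynOK H g N) {j k : ℕ} (hjk : k < j)
    (hj : (j : ℕ∞) ≤ N) {x : G} (hx : x ∈ Cs H g j) : PJ ρ g k x = vv g (k + 1) := by
  have key : ∀ m, ∀ k, k + m + 1 = j → ρ (par k) ((vv g (k + 1))⁻¹ * x) = 1 := by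
    intro m
    induction m with
    | zero =>
      intro k hk
      subst hk
      have := T.other hx
      simpa [par] using this
    | succ m ih =>
      intro k hk
      have h1 := ih (k + 1) (by omega)
      have hN : ((k + 1 : ℕ) : ℕ∞) < N := lt_of_lt_le' (by omega) hj
      have h2 : ρ (par (k + 1)) ((vv g (k + 1))⁻¹ * x) ≠ 1 := by
        rw [vv_inv_eq, T.equi _ _ _ (ok.mem _ hN), h1, mul_one]
        exact ok.ne _ (by omega) hN
      have := T.excl _ _ h2
      simpa [par] using this
  obtain ⟨m, hm⟩ : ∃ m, k + m + 1 = j := ⟨j - k - 1, by omega⟩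
  unfold PJ pj
  rw [vv_inv_eq, T.equi _ _ _ (ok.mem k (lt_of_lt_le' hjk hj)), key m k hm, mul_one]
  rfl

/-- The ray `γ` runs through the syllables `g`. -/
structure RepCore (H : Bool → Subgroup G) (g : ℕ → G) (N : ℕ∞) (t : ℕ → ℕ) (γ : ℕ → G) :
    Prop where
  zero : t 0 = 0
  mono : Monotone t
  pt : ∀ i : ℕ, (i : ℕ∞) ≤ N → γ (t i) = vv g i
  seg : ∀ i : ℕ, (i : ℕ∞) < N → ∀ s, t i ≤ s → s ≤ t (i + 1) → γ s ∈ Cs H g i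
  tail : ∀ n : ℕ, N = n → ∀ s, t n ≤ s → γ s ∈ Cs H g n

/-- The time interval spent in the `k`-th coset. -/
def segI (N : ℕ∞) (t : ℕ → ℕ) (k : ℕ) : Set ℕ :=
  {s | t k ≤ s ∧ ((k : ℕ∞) < N → s ≤ t (k + 1))}

variable {g : ℕ → G} {N : ℕ∞} {t : ℕ → ℕ} {γ : ℕ → G}

theorem RepCore.mem_Cs (R : RepCore H g N t γ) {k : ℕ} (hk : (k : ℕ∞) ≤ N) {s : ℕ}
    (hs : s ∈ segI N t k) : γ s ∈ Cs H g k := by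
  rcases lt_or_eq_of_le hk with h | h
  · exact R.seg k h s hs.1 (hs.2 h)
  · exact R.tail k h.symm s hs.1

theorem RepCore.t_lt (R : RepCore H g N t γ) (ok : SynOK H g N) {i : ℕ} (hi : 1 ≤ i)
    (hN : (i : ℕ∞) < N) : t i < t (i + 1) := by
  apply lt_of_le_of_ne (R.mono (Nat.le_succ i))
  intro h
  have h1 := R.pt i hN.le
  have h2 := R.pt (i + 1) (succ_le_of_lt' hN)
  rw [← h, h1] at h2
  have : g i = 1 := by
    simpa [vv] using h2.symm
  exact ok.ne i hi hN this

theorem RepCore.t_ge (R : RepCore H g N t γ) (ok : SynOK H g N) :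
    ∀ i : ℕ, (i : ℕ∞) ≤ N → i ≤ t i + 1 := by
  intro i
  induction i with
  | zero => intro _; omega
  | succ i ih =>
    intro h
    have h1 := ih (lt_of_succ_le h).le
    by_cases hi : 1 ≤ i
    · have := R.t_lt ok hi (lt_of_succ_le h)
      omega
    · omega

theorem RepCore.cover (R : RepCore H g N t γ) (ok : SynOK H g N) (s : ℕ) :
    ∃ k : ℕ, (k : ℕ∞) ≤ N ∧ t k ≤ s ∧ ((k : ℕ∞) < N → s < t (k + 1)) := by
  classical
  have hex : ∃ k : ℕ, ¬ ((k : ℕ∞) < N ∧ t (k + 1) ≤ s) := by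
    by_cases hN : N = ⊤
    · refine ⟨s + 1, ?_⟩
      rintro ⟨_, h⟩
      have := R.t_ge ok (s + 1 + 1) (by rw [hN]; exact le_top)
      omega
    · obtain ⟨n, hn⟩ := ENat.ne_top_iff_exists.1 hN
      exact ⟨n, by rw [← hn]; simp⟩
  have h1 := Nat.find_spec hex
  have h2 : ∀ m, m < Nat.find hex → ((m : ℕ∞) < N ∧ t (m + 1) ≤ s) := by
    intro m hm
    have := Nat.find_min hex hm
    rwa [not_not] at this
  generalize Nat.find hex = k at h1 h2
  refine ⟨k, ?_, ?_, ?_⟩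
  · rcases k with _ | k
    · simp
    · exact succ_le_of_lt' (h2 k (by omega)).1
  · rcases k with _ | k
    · rw [R.zero]; omega
    · exact (h2 k (by omega)).2
  · intro h
    by_contra hc
    exact h1 ⟨h, by omega⟩

theorem RepCore.PJ_before (R : RepCore H g N t γ) (T : TreeLike H ρ) (ok : SynOK H g N) {k s : ℕ}
    (hk : (k : ℕ∞) ≤ N) (hs : s ≤ t k) : PJ ρ g k (γ s) = vv g k := by
  by_cases h : s = t k
  · rw [h, R.pt k hk]; exact PJ_self T (vv_mem_Cs g k)
  · obtain ⟨j, j1, j2, j3⟩ := R.cover ok s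
    have hj : j < k := by
      by_contra hc
      have := R.mono (not_lt.1 hc)
      omega
    exact PJ_lt T ok hj hk (R.mem_Cs j1 ⟨j2, fun h => (j3 h).le⟩)

theorem RepCore.PJ_after (R : RepCore H g N t γ) (T : TreeLike H ρ) (ok : SynOK H g N) {k s : ℕ}
    (hk : (k : ℕ∞) < N) (hs : t (k + 1) ≤ s) : PJ ρ g k (γ s) = vv g (k + 1) := by
  obtain ⟨j, j1, j2, j3⟩ := R.cover ok s
  have hj : k < j := by
    by_contra hc
    have h1 : (j : ℕ∞) < N := lt_of_le_of_lt (by exact_mod_cast not_lt.1 hc) hk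
    have := R.mono (show j + 1 ≤ k + 1 by omega)
    have := j3 h1
    omega
  exact PJ_gt T ok hj j1 (R.mem_Cs j1 ⟨j2, fun h => (j3 h).le⟩)

theorem RepCore.PJ_in (R : RepCore H g N t γ) (T : TreeLike H ρ) {k s : ℕ}
    (hk : (k : ℕ∞) ≤ N) (hs : s ∈ segI N t k) : PJ ρ g k (γ s) = γ s :=
  PJ_self T (R.mem_Cs hk hs)

/-- The projection of the ray stays in its own segment. -/
theorem RepCore.PJ_seg (R : RepCore H g N t γ) (T : TreeLike H ρ) (ok : SynOK H g N) {k : ℕ}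
    (hk : (k : ℕ∞) ≤ N) (s : ℕ) : PJ ρ g k (γ s) ∈ γ '' segI N t k := by
  by_cases h1 : s ≤ t k
  · rw [R.PJ_before T ok hk h1]
    exact ⟨t k, ⟨le_rfl, fun _ => R.mono (Nat.le_succ k)⟩, R.pt k hk⟩
  · by_cases h2 : (k : ℕ∞) < N ∧ t (k + 1) ≤ s
    · rw [R.PJ_after T ok h2.1 h2.2]
      exact ⟨t (k + 1), ⟨R.mono (Nat.le_succ k), fun _ => le_rfl⟩, R.pt (k + 1) (succ_le_of_lt' h2.1)⟩
    · have hs : s ∈ segI N t k := ⟨by omega, fun h => by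
        by_contra hc; exact h2 ⟨h, by omega⟩⟩
      rw [R.PJ_in T hk hs]
      exact ⟨s, hs, rfl⟩

/-- Unbounded distances from the origin contradict an infinite list of prefixes. -/
theorem RepCore.exists_branch (Q : Geo H ρ S) (R : RepCore H g N t γ) (ok : SynOK H g N)
    (hγ : IsGeodesicOnN (wordDist S) γ univ) (x : G) :
    ∃ k : ℕ, (k : ℕ∞) ≤ N ∧ ((k : ℕ∞) < N → PJ ρ g k x ≠ vv g (k + 1)) ∧
      ∀ j < k, PJ ρ g j x = vv g (j + 1) := by
  classical
  have P := wd_PM Q.top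
  have hex : ∃ k : ℕ, ¬ ((k : ℕ∞) < N ∧ PJ ρ g k x = vv g (k + 1)) := by
    by_contra hc
    push Not at hc
    obtain ⟨m, hm⟩ := exists_nat_gt (wordDist S 1 x)
    obtain ⟨hk, hp⟩ := hc (m + 1)
    have h0 : γ 0 = 1 := by
      have := R.pt 0 (by simp)
      rwa [R.zero] at this
    have h1 : PJ ρ g (m + 1) 1 = vv g (m + 1) := by
      rw [← h0]; exact R.PJ_before Q.tree ok hk.le (Nat.zero_le _)
    have hne : vv g (m + 1) ≠ vv g (m + 1 + 1) := by
      intro h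
      apply ok.ne (m + 1) (by omega) hk
      change vv g (m + 1) = vv g (m + 1) * g (m + 1) at h
      simpa using h.symm
    have hst := Q.star (par (m + 1)) (vv g (m + 1)) 1 x
      (by change PJ ρ g (m + 1) 1 ≠ PJ ρ g (m + 1) x; rw [h1, hp]; exact hne)
    change _ = wordDist S 1 (PJ ρ g (m + 1) 1) + wordDist S (PJ ρ g (m + 1) 1) (PJ ρ g (m + 1) x)
      + wordDist S (PJ ρ g (m + 1) x) x at hst
    rw [h1] at hst
    have hd : wordDist S 1 (vv g (m + 1)) = t (m + 1) := by
      rw [← h0, ← R.pt (m + 1) hk.le, hγ 0 trivial _ trivial]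
      simp
    have ht := R.t_ge ok (m + 1) hk.le
    have ht' : (m : ℝ) ≤ t (m + 1) := by exact_mod_cast (by omega : m ≤ t (m + 1))
    linarith [P.nonneg (vv g (m + 1)) (PJ ρ g (m + 1) x), P.nonneg (PJ ρ g (m + 1) x) x]
  have h1 := Nat.find_spec hex
  have h2 : ∀ m, m < Nat.find hex → ((m : ℕ∞) < N ∧ PJ ρ g m x = vv g (m + 1)) := by
    intro m hm
    have := Nat.find_min hex hm
    rwa [not_not] at this
  generalize Nat.find hex = k at h1 h2
  refine ⟨k, ?_, fun h h' => h1 ⟨h, h'⟩, fun j hj => (h2 j hj).2⟩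
  rcases k with _ | k
  · simp
  · exact succ_le_of_lt' (h2 k (by omega)).1

theorem RepCore.morse (Q : Geo H ρ S) (R : RepCore H g N t γ) (ok : SynOK H g N)
    (hγ : IsGeodesicOnN (wordDist S) γ univ) {M : MorseGauge}
    (hM : ∀ k : ℕ, (k : ℕ∞) ≤ N → RelMorse (wordDist S) (Cs H g k) M γ (segI N t k)) :
    IsMorseOnN (wordDist S) (bigM M) γ univ := by
  have T := Q.tree
  apply morse_of_good (wd_PM Q.top)
  intro x
  obtain ⟨k, hk, hk1, hk2⟩ := R.exists_branch Q ok hγ x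
  refine ⟨PJ ρ g k, segI N t k, Q.star _ _, R.PJ_seg T ok hk, ?_, ?_⟩
  · intro s hs
    obtain ⟨j, j1, j2, j3⟩ := R.cover ok s
    have hC := R.mem_Cs j1 ⟨j2, fun h => (j3 h).le⟩
    rcases lt_trichotomy j k with h | h | h
    · right
      rw [PJ_lt T ok h hk hC] at hs
      rw [← hs]
      obtain ⟨m, rfl⟩ : ∃ m, k = m + 1 := ⟨k - 1, by omega⟩
      have hm := hk2 m (by omega)
      have e1 : ρ (par (m + 1)) ((vv g (m + 1))⁻¹ * x) = 1 := by
        have : vv g (m + 1) = vv g (m + 1) * ρ (par (m + 1)) ((vv g (m + 1))⁻¹ * x) := hs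
        simpa using this.symm
      have e2 : ρ (par m) ((vv g (m + 1))⁻¹ * x) = 1 := by
        have h3 : vv g m * ρ (par m) ((vv g m)⁻¹ * x) = vv g m * g m := hm
        have h4 := mul_left_cancel h3
        rw [vv_inv_succ, T.equi _ _ _ (inv_mem (ok.mem m (lt_of_succ_le hk))), h4, inv_mul_cancel]
      have := T.triv (par m) _ e2 e1
      have h5 := congrArg (fun z => vv g (m + 1) * z) this
      simpa using h5
    · left; subst h; exact PJ_self T hC
    · exfalso
      have hkN := lt_of_lt_le' h j1
      rw [PJ_gt T ok h j1 hC] at hs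
      exact hk1 hkN hs.symm
  · intro L e hL he η a b hab hη
    refine hM k hk L e hL he η a b hab ?_
    intro i hi
    obtain ⟨y, hy⟩ := hη i hi
    rw [← hy]; exact PJ_range T g k y

/-- Conversely the segments of a Morse ray are Morse in their cosets. -/
theorem RepCore.seg_morse (Q : Geo H ρ S) (R : RepCore H g N t γ) (ok : SynOK H g N)
    {M : MorseGauge} (hM : IsMorseOnN (wordDist S) M γ univ) {k : ℕ} (hk : (k : ℕ∞) ≤ N) :
    RelMorse (wordDist S) (Cs H g k) M γ (segI N t k) := by
  intro L e hL he η a b hab hη hq ha hb i hi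
  have P := wd_PM Q.top
  obtain ⟨j, _, hj⟩ := hM L e hL he η a b hab hq (image_mono (subset_univ _) ha)
    (image_mono (subset_univ _) hb) i hi
  obtain ⟨j', h1, h2⟩ := R.PJ_seg Q.tree ok hk j
  refine ⟨j', h1, ?_⟩
  rw [h2]
  have h3 := (Q.star (par k) (vv g k)).lip P (η i) (γ j)
  change wordDist S (PJ ρ g k (η i)) (PJ ρ g k (γ j)) ≤ _ at h3
  rw [PJ_self Q.tree (hη i hi)] at h3
  linarith

end Comb

section Concat

variable {G : Type*} [Group G] {S : Set G} {H : Bool → Subgroup G} {ρ : Bool → G → G}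

/-- Local parameters allowed in the `k`-th piece. -/
def segJ (N : ℕ∞) (ℓ : ℕ → ℕ) (k : ℕ) : Set ℕ := {j | (k : ℕ∞) < N → j ≤ ℓ k}

theorem relMorse_translate {d : G → G → ℝ} (P : PM d) {K : Subgroup G} {M : MorseGauge}
    {p γ : ℕ → G} {J I : Set ℕ} {v : G} {c : ℕ} (hM : RelMorse d K M p J)
    (hI : ∀ s ∈ I, ∃ j ∈ J, s = c + j) (hJ : ∀ j ∈ J, c + j ∈ I ∧ γ (c + j) = v * p j) :
    RelMorse d {x | v⁻¹ * x ∈ K} M γ I := by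
  intro L e hL he η a b hab hη hq ha hb i hi
  have e1 : ∀ x y, d (v⁻¹ * x) y = d x (v * y) := by
    intro x y; rw [← P.left v]; simp
  have conv : ∀ m, η m ∈ γ '' I → v⁻¹ * η m ∈ p '' J := by
    rintro m ⟨s, hs, hs'⟩
    obtain ⟨j, hj, rfl⟩ := hI s hs
    refine ⟨j, hj, ?_⟩
    rw [← hs', (hJ j hj).2]; simp
  obtain ⟨j, hj, hj'⟩ := hM L e hL he (fun m => v⁻¹ * η m) a b hab hη
    (by intro x hx y hy; simp only [P.left]; exact hq x hx y hy) (conv a ha) (conv b hb) i hi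
  refine ⟨c + j, (hJ j hj).1, ?_⟩
  rw [(hJ j hj).2, ← e1]
  exact hj'

theorem concat_exists (Q : Geo H ρ S) {g : ℕ → G} {N : ℕ∞} (ok : SynOK H g N) {ℓ : ℕ → ℕ}
    {p : ℕ → ℕ → G} {M : MorseGauge}
    (p0 : ∀ k : ℕ, (k : ℕ∞) ≤ N → p k 0 = 1)
    (pH : ∀ k : ℕ, (k : ℕ∞) ≤ N → ∀ j ∈ segJ N ℓ k, p k j ∈ H (par k))
    (pg : ∀ k : ℕ, (k : ℕ∞) ≤ N → IsGeodesicOnN (wordDist S) (p k) (segJ N ℓ k))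
    (pe : ∀ k : ℕ, (k : ℕ∞) < N → p k (ℓ k) = g k)
    (pM : ∀ k : ℕ, (k : ℕ∞) ≤ N → RelMorse (wordDist S) (H (par k)) M (p k) (segJ N ℓ k)) :
    ∃ (t : ℕ → ℕ) (γ : ℕ → G), RepCore H g N t γ ∧ IsGeodesicOnN (wordDist S) γ univ ∧
      IsMorseOnN (wordDist S) (bigM M) γ univ ∧
      ∀ k : ℕ, (k : ℕ∞) ≤ N → ∀ j ∈ segJ N ℓ k, γ (t k + j) = vv g k * p k j := by
  classical
  have P := wd_PM Q.top
  have T := Q.tree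
  let t : ℕ → ℕ := fun k => ∑ j ∈ Finset.range k, ℓ j
  have t0 : t 0 = 0 := by simp [t]
  have tS : ∀ k, t (k + 1) = t k + ℓ k := fun k => Finset.sum_range_succ _ _
  have tm : Monotone t := monotone_nat_of_le_succ (fun k => by rw [tS]; omega)
  have ℓpos : ∀ k : ℕ, 1 ≤ k → (k : ℕ∞) < N → 1 ≤ ℓ k := by
    intro k h1 h2
    by_contra hc
    have h0 : ℓ k = 0 := by omega
    apply ok.ne k h1 h2
    rw [← pe k h2, h0, p0 k h2.le]
  have rep : ∀ s : ℕ, ∃ k j : ℕ, (k : ℕ∞) ≤ N ∧ s = t k + j ∧ ((k : ℕ∞) < N → j + 1 ≤ ℓ k) := by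
    -- a helper moving past empty pieces
    have start : ∀ k : ℕ, 1 ≤ k → (k : ℕ∞) ≤ N →
        ∃ k' j : ℕ, (k' : ℕ∞) ≤ N ∧ t k = t k' + j ∧ ((k' : ℕ∞) < N → j + 1 ≤ ℓ k') := by
      intro k h1 h2
      exact ⟨k, 0, h2, by simp, fun h => by have := ℓpos k h1 h; omega⟩
    intro s
    induction s with
    | zero =>
      by_cases h : (((0 : ℕ) : ℕ∞) < N) ∧ ℓ 0 = 0
      · obtain ⟨k', j, h1, h2, h3⟩ := start 1 le_rfl (succ_le_of_lt' h.1)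
        refine ⟨k', j, h1, ?_, h3⟩
        rw [← h2, tS, t0, h.2]
      · refine ⟨0, 0, by simp, by simp [t0], fun h' => ?_⟩
        have : ℓ 0 ≠ 0 := fun h'' => h ⟨h', h''⟩
        omega
    | succ s ih =>
      obtain ⟨k, j, h1, h2, h3⟩ := ih
      by_cases h : (k : ℕ∞) < N ∧ ℓ k ≤ j + 1
      · obtain ⟨k', j', h1', h2', h3'⟩ := start (k + 1) (by omega) (succ_le_of_lt' h.1)
        refine ⟨k', j', h1', ?_, h3'⟩
        rw [← h2', tS]
        have := h3 h.1
        omega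
      · refine ⟨k, j + 1, h1, by omega, fun h' => ?_⟩
        by_contra hc
        exact h ⟨h', by omega⟩
  have veq : ∀ i i' : ℕ, i ≤ i' → (i' : ℕ∞) ≤ N → t i = t i' → vv g i = vv g i' := by
    intro i i' h
    induction i', h using Nat.le_induction with
    | base => intro _ _; rfl
    | succ m hm ih =>
      intro h1 h2
      have hmN := lt_of_succ_le h1
      have a1 := tm hm
      have a2 := tS m
      have : ℓ m = 0 := by omega
      have hg : g m = 1 := by rw [← pe m hmN, this, p0 m hmN.le]
      rw [ih hmN.le (by omega)]
      simp [vv, hg]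
  have wdl : ∀ k k' j j' : ℕ, k < k' → (k' : ℕ∞) ≤ N → j ∈ segJ N ℓ k → t k + j = t k' + j' →
      vv g k * p k j = vv g k' * p k' j' := by
    intro k k' j j' h h1 h2 h3
    have hkN := lt_of_lt_le' h h1
    have a1 := h2 hkN
    have a2 := tm (show k + 1 ≤ k' by omega)
    have a3 := tS k
    have a4 : j = ℓ k := by omega
    have a5 : j' = 0 := by omega
    rw [a4, a5, pe k hkN, p0 k' h1, mul_one]
    exact veq (k + 1) k' (by omega) h1 (by omega)
  choose K J hK hsJ hJ using rep
  let γ : ℕ → G := fun s => vv g (K s) * p (K s) (J s)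
  have hJmem : ∀ s, J s ∈ segJ N ℓ (K s) := fun s h => by have := hJ s h; omega
  have hγ : ∀ k : ℕ, (k : ℕ∞) ≤ N → ∀ j ∈ segJ N ℓ k, γ (t k + j) = vv g k * p k j := by
    intro k hk j hj
    have e := hsJ (t k + j)
    change vv g (K (t k + j)) * p (K (t k + j)) (J (t k + j)) = _
    rcases lt_trichotomy k (K (t k + j)) with h | h | h
    · exact (wdl _ _ _ _ h (hK _) hj e).symm
    · rw [← h] at e ⊢
      have : J (t k + j) = j := by omega
      rw [this]
    · exact wdl _ _ _ _ h hk (hJmem _) e.symm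
  have zmem : ∀ k, 0 ∈ segJ N ℓ k := fun k _ => Nat.zero_le _
  have R : RepCore H g N t γ := by
    refine ⟨t0, tm, ?_, ?_, ?_⟩
    · intro i hi
      have := hγ i hi 0 (zmem i)
      rwa [p0 i hi, mul_one, add_zero] at this
    · intro i hi s h1 h2
      have hj : s - t i ∈ segJ N ℓ i := by intro _; have := tS i; omega
      have := hγ i hi.le (s - t i) hj
      rw [show t i + (s - t i) = s by omega] at this
      rw [this]
      simp only [Cs, mem_ofPred_eq, inv_mul_cancel_left]
      exact pH i hi.le _ hj
    · intro n hn s h1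
      have hj : s - t n ∈ segJ N ℓ n := by intro h; rw [hn] at h; exact absurd h (lt_irrefl _)
      have := hγ n hn.ge (s - t n) hj
      rw [show t n + (s - t n) = s by omega] at this
      rw [this]
      simp only [Cs, mem_ofPred_eq, inv_mul_cancel_left]
      exact pH n hn.ge _ hj
  have γ0 : γ 0 = 1 := by
    have := R.pt 0 (by simp)
    rwa [t0] at this
  -- distance from the origin
  have far : ∀ k : ℕ, (k : ℕ∞) ≤ N → ∀ x ∈ Cs H g k,
      wordDist S 1 x = wordDist S 1 (vv g k) + wordDist S (vv g k) x := by
    intro k hk x hx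
    by_cases h : x = vv g k
    · rw [h, P.self]; simp
    · have h1 : PJ ρ g k 1 = vv g k := by
        rw [← γ0]; exact R.PJ_before T ok hk (Nat.zero_le _)
      have h2 : PJ ρ g k x = x := PJ_self T hx
      have h3 := Q.star (par k) (vv g k) 1 x
        (by change PJ ρ g k 1 ≠ PJ ρ g k x; rw [h1, h2]; exact Ne.symm h)
      change _ = wordDist S 1 (PJ ρ g k 1) + wordDist S (PJ ρ g k 1) (PJ ρ g k x)
        + wordDist S (PJ ρ g k x) x at h3
      rw [h1, h2, P.self] at h3
      linarith
  have dseg : ∀ k : ℕ, (k : ℕ∞) ≤ N → ∀ j ∈ segJ N ℓ k,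
      wordDist S (vv g k) (vv g k * p k j) = j := by
    intro k hk j hj
    have h1 := P.left (vv g k) 1 (p k j)
    rw [mul_one] at h1
    rw [h1, ← p0 k hk, pg k hk 0 (zmem k) j hj]
    simp
  have pmem : ∀ k : ℕ, (k : ℕ∞) ≤ N → ∀ j ∈ segJ N ℓ k, vv g k * p k j ∈ Cs H g k := by
    intro k hk j hj
    simp only [Cs, mem_ofPred_eq, inv_mul_cancel_left]
    exact pH k hk _ hj
  have dv : ∀ k : ℕ, (k : ℕ∞) ≤ N → wordDist S 1 (vv g k) = t k := by
    intro k
    induction k with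
    | zero => intro _; rw [t0]; simp [vv, P.self]
    | succ k ih =>
      intro h
      have hk := lt_of_succ_le h
      have hm : ℓ k ∈ segJ N ℓ k := fun _ => le_rfl
      have h1 := far k hk.le (vv g k * p k (ℓ k)) (pmem k hk.le _ hm)
      rw [dseg k hk.le _ hm, ih hk.le, pe k hk] at h1
      change wordDist S 1 (vv g k * g k) = _
      rw [h1, tS]; push_cast; ring
  have dγ : ∀ s, wordDist S 1 (γ s) = s := by
    intro s
    have h1 := far (K s) (hK s) _ (pmem (K s) (hK s) (J s) (hJmem s))
    rw [dseg _ (hK s) _ (hJmem s), dv _ (hK s)] at h1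
    change wordDist S 1 (vv g (K s) * p (K s) (J s)) = _
    rw [h1]
    exact_mod_cast (hsJ s).symm
  have dstep : ∀ s, wordDist S (γ s) (γ (s + 1)) ≤ 1 := by
    intro s
    have hm : J s + 1 ∈ segJ N ℓ (K s) := fun h => hJ s h
    have h1 := hγ (K s) (hK s) (J s + 1) hm
    rw [← add_assoc, ← hsJ s] at h1
    rw [h1]
    change wordDist S (vv g (K s) * p (K s) (J s)) _ ≤ 1
    rw [P.left, pg (K s) (hK s) _ (hJmem s) _ hm]
    push_cast
    rw [abs_sub_comm]; simp
  have dup : ∀ s m : ℕ, wordDist S (γ s) (γ (s + m)) ≤ m := by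
    intro s m
    induction m with
    | zero => simp [P.self]
    | succ m ih =>
      have h1 := P.tri (γ s) (γ (s + m)) (γ (s + (m + 1)))
      have h2 := dstep (s + m)
      rw [add_assoc] at h2
      push_cast
      linarith
  have dle : ∀ s s' : ℕ, s ≤ s' → wordDist S (γ s) (γ s') = (s' : ℝ) - s := by
    intro s s' h
    obtain ⟨m, rfl⟩ := Nat.exists_eq_add_of_le h
    have h1 := dup s m
    have h2 := P.tri 1 (γ s) (γ (s + m))
    rw [dγ, dγ] at h2
    push_cast at *
    linarith
  have geo : IsGeodesicOnN (wordDist S) γ univ := by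
    intro i _ j _
    rcases le_total i j with h | h
    · have hc : (i : ℝ) ≤ j := by exact_mod_cast h
      rw [dle i j h, abs_sub_comm, abs_of_nonneg (by linarith)]
    · have hc : (j : ℝ) ≤ i := by exact_mod_cast h
      rw [P.comm, dle j i h, abs_of_nonneg (by linarith)]
  refine ⟨t, γ, R, geo, R.morse Q ok geo ?_, hγ⟩
  intro k hk
  refine relMorse_translate P (c := t k) (v := vv g k) (pM k hk) ?_ ?_
  · rintro s ⟨h1, h2⟩
    refine ⟨s - t k, fun h => ?_, by omega⟩
    have := h2 h
    rw [tS] at this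
    omega
  · intro j hj
    refine ⟨⟨by omega, fun h => ?_⟩, hγ k hk j hj⟩
    have := hj h
    rw [tS]; omega

end Concat

section Rays

variable {G : Type*} [Group G] {S : Set G} {H : Bool → Subgroup G} {ρ : Bool → G → G}
  {g g' : ℕ → G} {N N' : ℕ∞} {t t' : ℕ → ℕ} {γ γ' : ℕ → G}

theorem RepCore.start (R : RepCore H g N t γ) : γ 0 = 1 := by
  have := R.pt 0 (by simp)
  rwa [R.zero] at this

theorem geo_from_one (h0 : γ 0 = 1) (hγ : IsGeodesicOnN (wordDist S) γ univ) (s : ℕ) :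
    wordDist S 1 (γ s) = s := by
  rw [← h0, hγ 0 trivial _ trivial]
  simp

theorem RepCore.dist_vv (R : RepCore H g N t γ) (hγ : IsGeodesicOnN (wordDist S) γ univ)
    {i : ℕ} (hi : (i : ℕ∞) ≤ N) : wordDist S 1 (vv g i) = t i := by
  rw [← R.pt i hi]
  exact geo_from_one R.start hγ _

theorem RepCore.t_eq (R : RepCore H g N t γ) (hγ : IsGeodesicOnN (wordDist S) γ univ)
    (R' : RepCore H g N t' γ') (hγ' : IsGeodesicOnN (wordDist S) γ' univ)
    {i : ℕ} (hi : (i : ℕ∞) ≤ N) : t i = t' i := by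
  have h1 := R.dist_vv hγ hi
  rw [R'.dist_vv hγ' hi] at h1
  exact_mod_cast h1.symm

theorem same_bdd_inf (Q : Geo H ρ S) (ok : SynOK H g ⊤) (R : RepCore H g ⊤ t γ)
    (hγ : IsGeodesicOnN (wordDist S) γ univ) (R' : RepCore H g ⊤ t' γ')
    (hγ' : IsGeodesicOnN (wordDist S) γ' univ) {M : MorseGauge}
    (hM : IsMorseOnN (wordDist S) M γ univ) (s : ℕ) :
    wordDist S (γ s) (γ' s) ≤ 2 * M 1 0 := by
  have P := wd_PM Q.top
  have hts := R.t_ge ok (s + 1) le_top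
  have hte := R.t_eq hγ R' hγ' (i := s + 1) le_top
  obtain ⟨j, -, hj⟩ := hM 1 0 le_rfl le_rfl γ' 0 (t (s + 1)) (Nat.zero_le _)
    (by
      intro a _ b _
      rw [hγ' a trivial b trivial]
      constructor <;> simp)
    ⟨0, trivial, by rw [R.start, R'.start]⟩
    ⟨t (s + 1), trivial, by rw [R.pt _ le_top, hte, R'.pt _ le_top]⟩ s ⟨Nat.zero_le _, by omega⟩
  have h1 := geo_from_one R.start hγ j
  have h2 := geo_from_one R'.start hγ' s
  have h3 := P.tri 1 (γ j) (γ' s)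
  have h4 := P.tri 1 (γ' s) (γ j)
  have h5 := P.comm (γ j) (γ' s)
  have h6 := P.tri (γ s) (γ j) (γ' s)
  have h7 := hγ s trivial j trivial
  have h8 : |(s : ℝ) - j| ≤ wordDist S (γ' s) (γ j) := by
    rw [abs_le]; constructor <;> linarith
  linarith

theorem same_bdd_fin (Q : Geo H ρ S) {n : ℕ} (R : RepCore H g n t γ)
    (hγ : IsGeodesicOnN (wordDist S) γ univ) (R' : RepCore H g n t' γ')
    (hγ' : IsGeodesicOnN (wordDist S) γ' univ) {C : ℝ}
    (hC : ∀ s, wordDist S (γ (t n + s)) (γ' (t' n + s)) ≤ C) (s : ℕ) :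
    wordDist S (γ s) (γ' s) ≤ C + 2 * t n := by
  have P := wd_PM Q.top
  have hte := R.t_eq hγ R' hγ' (i := n) le_rfl
  have hC0 := (P.nonneg _ _).trans (hC 0)
  by_cases hs : s ≤ t n
  · have h1 := geo_from_one R.start hγ s
    have h2 := geo_from_one R'.start hγ' s
    have h3 := P.tri (γ s) 1 (γ' s)
    have h4 := P.comm (γ s) 1
    have h5 : (s : ℝ) ≤ t n := by exact_mod_cast hs
    linarith
  · obtain ⟨m, rfl⟩ : ∃ m, s = t n + m := ⟨s - t n, by omega⟩
    have := hC m
    rw [← hte] at this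
    have h5 : (0 : ℝ) ≤ t n := by positivity
    linarith

theorem rep_unique_step (Q : Geo H ρ S) (ok : SynOK H g N) (R : RepCore H g N t γ)
    (hγ : IsGeodesicOnN (wordDist S) γ univ) (ok' : SynOK H g' N') (R' : RepCore H g' N' t' γ')
    (hγ' : IsGeodesicOnN (wordDist S) γ' univ) {C : ℝ}
    (hC : ∀ s, wordDist S (γ s) (γ' s) ≤ C) {k : ℕ} (hk : (k : ℕ∞) < N) (hk' : (k : ℕ∞) ≤ N')
    (hv : vv g k = vv g' k) : (k : ℕ∞) < N' ∧ vv g (k + 1) = vv g' (k + 1) := by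
  have P := wd_PM Q.top
  have hPJ : PJ ρ g k = PJ ρ g' k := by funext x; unfold PJ; rw [hv]
  obtain ⟨m, hm⟩ := exists_nat_gt C
  have hd := R.dist_vv hγ (succ_le_of_lt' hk)
  rcases lt_or_eq_of_le hk' with h | h
  · refine ⟨h, ?_⟩
    by_contra hne
    set s := t (k + 1) + t' (k + 1) + m with hs
    have h1 : PJ ρ g k (γ s) = vv g (k + 1) := R.PJ_after Q.tree ok hk (by omega)
    have h2 : PJ ρ g k (γ' s) = vv g' (k + 1) := by
      rw [hPJ]; exact R'.PJ_after Q.tree ok' h (by omega)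
    have h3 := Q.star (par k) (vv g k) (γ s) (γ' s)
      (by change PJ ρ g k _ ≠ PJ ρ g k _; rw [h1, h2]; exact hne)
    change _ = wordDist S (γ s) (PJ ρ g k (γ s)) + wordDist S (PJ ρ g k (γ s)) (PJ ρ g k (γ' s))
      + wordDist S (PJ ρ g k (γ' s)) (γ' s) at h3
    rw [h1, h2] at h3
    have h4 := P.tri 1 (vv g (k + 1)) (γ s)
    rw [P.comm (vv g (k + 1)), hd, geo_from_one R.start hγ] at h4
    have h5 : (s : ℝ) = t (k + 1) + t' (k + 1) + m := by rw [hs]; push_cast; ring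
    have h6 : (0 : ℝ) ≤ t' (k + 1) := by positivity
    linarith [hC s, P.nonneg (vv g (k + 1)) (vv g' (k + 1)), P.nonneg (vv g' (k + 1)) (γ' s)]
  · exfalso
    set s := t (k + 1) + t' k + m with hs
    have h1 : PJ ρ g k (γ s) = vv g (k + 1) := R.PJ_after Q.tree ok hk (by omega)
    have h2 : PJ ρ g k (γ' s) = γ' s := by
      rw [hPJ]; exact PJ_self Q.tree (R'.tail k h.symm s (by omega))
    have h3 := (Q.star (par k) (vv g k)).lip P (γ s) (γ' s)
    change wordDist S (PJ ρ g k (γ s)) (PJ ρ g k (γ' s)) ≤ _ at h3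
    rw [h1, h2] at h3
    have h4 := P.tri 1 (vv g (k + 1)) (γ' s)
    rw [hd, geo_from_one R'.start hγ'] at h4
    have h5 : (s : ℝ) = t (k + 1) + t' k + m := by rw [hs]; push_cast; ring
    have h6 : (0 : ℝ) ≤ t' k := by positivity
    linarith [hC s]

theorem rep_unique_aux (Q : Geo H ρ S) (ok : SynOK H g N) (R : RepCore H g N t γ)
    (hγ : IsGeodesicOnN (wordDist S) γ univ) (ok' : SynOK H g' N') (R' : RepCore H g' N' t' γ')
    (hγ' : IsGeodesicOnN (wordDist S) γ' univ) {C : ℝ}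
    (hC : ∀ s, wordDist S (γ s) (γ' s) ≤ C) :
    ∀ k : ℕ, (k : ℕ∞) ≤ N → (k : ℕ∞) ≤ N' ∧ vv g k = vv g' k := by
  intro k
  induction k with
  | zero => intro _; exact ⟨by simp, rfl⟩
  | succ k ih =>
    intro h
    obtain ⟨h1, h2⟩ := ih (lt_of_succ_le h).le
    obtain ⟨h3, h4⟩ := rep_unique_step Q ok R hγ ok' R' hγ' hC (lt_of_succ_le h) h1 h2
    exact ⟨succ_le_of_lt' h3, h4⟩

theorem enat_le_of_nat {N N' : ℕ∞} (h : ∀ k : ℕ, (k : ℕ∞) ≤ N → (k : ℕ∞) ≤ N') : N ≤ N' := by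
  exact ENat.forall_natCast_le_iff_le.1 (fun a ha => h a ha)

theorem rep_unique (Q : Geo H ρ S) (ok : SynOK H g N) (R : RepCore H g N t γ)
    (hγ : IsGeodesicOnN (wordDist S) γ univ) (ok' : SynOK H g' N') (R' : RepCore H g' N' t' γ')
    (hγ' : IsGeodesicOnN (wordDist S) γ' univ) {C : ℝ}
    (hC : ∀ s, wordDist S (γ s) (γ' s) ≤ C) :
    N = N' ∧ (∀ k : ℕ, (k : ℕ∞) ≤ N → vv g k = vv g' k) ∧
      (∀ k : ℕ, (k : ℕ∞) < N → g k = g' k) ∧ ∀ k : ℕ, (k : ℕ∞) ≤ N → t k = t' k := by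
  have P := wd_PM Q.top
  have h1 := rep_unique_aux Q ok R hγ ok' R' hγ' hC
  have h2 := rep_unique_aux Q ok' R' hγ' ok R hγ (C := C)
    (by intro s; rw [P.comm]; exact hC s)
  refine ⟨le_antisymm (enat_le_of_nat fun k hk => (h1 k hk).1)
    (enat_le_of_nat fun k hk => (h2 k hk).1), fun k hk => (h1 k hk).2, fun k hk => ?_,
    fun k hk => ?_⟩
  · have h3 := (h1 k hk.le).2
    have h4 := (h1 (k + 1) (succ_le_of_lt' hk)).2
    change vv g k * g k = vv g' k * g' k at h4
    rw [h3] at h4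
    exact mul_left_cancel h4
  · have h3 := R.dist_vv hγ hk
    rw [(h1 k hk).2, R'.dist_vv hγ' (h1 k hk).1] at h3
    exact_mod_cast h3.symm

/-- The ray leaves the coset of the factor `b` through its point at time `c`. -/
def Leaves (H : Bool → Subgroup G) (γ : ℕ → G) (b : Bool) (c : ℕ) : Prop :=
  ∃ s, c ≤ s ∧ (γ c)⁻¹ * γ (s + 1) ∉ H b

open Classical in
/-- The exit time. -/
noncomputable def exitT (H : Bool → Subgroup G) (γ : ℕ → G) (b : Bool) (c : ℕ) : ℕ :=
  if h : Leaves H γ b c then Nat.find h else c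

/-- The successive exit times. -/
noncomputable def exits (H : Bool → Subgroup G) (γ : ℕ → G) : ℕ → ℕ
  | 0 => 0
  | k + 1 => exitT H γ (par k) (exits H γ k)

theorem exitT_ge (γ : ℕ → G) (b : Bool) (c : ℕ) : c ≤ exitT H γ b c := by
  classical
  unfold exitT
  split_ifs with h
  · exact (Nat.find_spec h).1
  · exact le_rfl

theorem exitT_in (γ : ℕ → G) (b : Bool) (c s : ℕ) (h1 : c ≤ s) (h2 : s ≤ exitT H γ b c) :
    (γ c)⁻¹ * γ s ∈ H b := by
  classical
  unfold exitT at h2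
  by_cases hs : s = c
  · subst hs; simp [one_mem]
  · split_ifs at h2 with h
    · have := Nat.find_min h (m := s - 1) (by omega)
      rw [not_and, not_not] at this
      have := this (by omega)
      rwa [Nat.sub_add_cancel (by omega)] at this
    · omega

theorem exitT_out (γ : ℕ → G) (b : Bool) (c : ℕ) (h : Leaves H γ b c) :
    (γ c)⁻¹ * γ (exitT H γ b c + 1) ∉ H b := by
  classical
  unfold exitT
  rw [dif_pos h]
  exact (Nat.find_spec h).2

theorem rep_exists (Q : Geo H ρ S) (h0 : γ 0 = 1) (hγ : IsGeodesicOnN (wordDist S) γ univ) :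
    ∃ (g : ℕ → G) (N : ℕ∞) (t : ℕ → ℕ), SynOK H g N ∧ RepCore H g N t γ := by
  classical
  have P := wd_PM Q.top
  set t := exits H γ with ht
  set g : ℕ → G := fun k => (γ (t k))⁻¹ * γ (t (k + 1)) with hg
  have hmono : Monotone t := monotone_nat_of_le_succ fun k => exitT_ge _ _ _
  have hvv : ∀ k, vv g k = γ (t k) := by
    intro k
    induction k with
    | zero => exact h0.symm
    | succ k ih => change vv g k * g k = _; rw [ih, hg]; simp
  obtain ⟨N, hN1, hN2⟩ : ∃ N : ℕ∞, (∀ k : ℕ, (k : ℕ∞) < N → Leaves H γ (par k) (t k)) ∧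
      ∀ n : ℕ, N = n → ¬ Leaves H γ (par n) (t n) := by
    by_cases h : ∃ k : ℕ, ¬ Leaves H γ (par k) (t k)
    · refine ⟨(Nat.find h : ℕ), ?_, ?_⟩
      · intro k hk
        have := Nat.find_min h (m := k) (by exact_mod_cast hk)
        rwa [not_not] at this
      · intro n hn
        have : Nat.find h = n := by exact_mod_cast hn
        rw [← this]; exact Nat.find_spec h
    · push Not at h
      exact ⟨⊤, fun k _ => h k, fun n hn => by simp at hn⟩
  have hseg : ∀ k s, t k ≤ s → s ≤ t (k + 1) → (γ (t k))⁻¹ * γ s ∈ H (par k) :=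
    fun k s h1 h2 => exitT_in _ _ _ _ h1 h2
  refine ⟨g, N, t, ⟨fun i _ => hseg i _ (hmono (Nat.le_succ i)) le_rfl, ?_⟩,
    ⟨rfl, hmono, fun i _ => (hvv i).symm, ?_, ?_⟩⟩
  · intro i hi hiN hone
    obtain ⟨k, rfl⟩ : ∃ k, i = k + 1 := ⟨i - 1, by omega⟩
    have hk : (k : ℕ∞) < N := lt_of_lt_le' (Nat.lt_succ_self k) hiN.le
    have o1 : (γ (t k))⁻¹ * γ (t (k + 1) + 1) ∉ H (par k) := exitT_out _ _ _ (hN1 k hk)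
    have o2 := hseg k _ (hmono (Nat.le_succ k)) le_rfl
    have o3 : (γ (t (k + 1)))⁻¹ * γ (t (k + 1) + 1) ∉ H (par k) := by
      intro hc
      apply o1
      have := mul_mem o2 hc
      simpa [mul_assoc] using this
    obtain ⟨τ, hτ⟩ := Q.letter (x := γ (t (k + 1))) (y := γ (t (k + 1) + 1)) (by
      rw [hγ _ trivial _ trivial]; simp)
    have hτ' : τ = !par k := by
      apply Bool.eq_not_of_ne
      rintro rfl; exact o3 hτ
    subst hτ'
    have o4 : (γ (t (k + 1)))⁻¹ * γ (t (k + 1 + 1) + 1) ∉ H (par (k + 1)) :=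
      exitT_out _ _ _ (hN1 _ hiN)
    have o5 : t (k + 1) = t (k + 1 + 1) := by
      have e : γ (t (k + 1)) = γ (t (k + 1 + 1)) := by
        have : (γ (t (k + 1)))⁻¹ * γ (t (k + 1 + 1)) = 1 := hone
        exact inv_mul_eq_one.1 this
      have e1 := geo_from_one h0 hγ (t (k + 1))
      rw [e, geo_from_one h0 hγ] at e1
      exact_mod_cast e1.symm
    rw [← o5] at o4
    exact o4 hτ
  · intro i _ s h1 h2
    change (vv g i)⁻¹ * γ s ∈ H (par i)
    rw [hvv]; exact hseg i s h1 h2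
  · intro n hn s hs
    change (vv g n)⁻¹ * γ s ∈ H (par n)
    rw [hvv]
    by_cases h : s = t n
    · rw [h]; simp [one_mem]
    · by_contra hc
      apply hN2 n hn
      refine ⟨s - 1, by omega, ?_⟩
      rwa [Nat.sub_add_cancel (by omega)]

end Rays

section Transfer

/-- A retract which is isometrically embedded. -/
structure Fac {K G : Type*} [Group K] [Group G] (φ : K →* G) (r : G →* K) (T : Set K) (S : Set G) :
    Prop where
  ret : ∀ a, r (φ a) = a
  iso : ∀ a b, wordDist S (φ a) (φ b) = wordDist T a b
  topK : Subgroup.closure T = ⊤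

variable {K G : Type*} [Group K] [Group G] {φ : K →* G} {r : G →* K} {T : Set K} {S : Set G}

theorem shrink_word (hr : ∀ s ∈ S, r s ∈ T ∨ r s = 1) (l : List G) (hl : IsWordOver S l) :
    ∃ l' : List K, IsWordOver T l' ∧ l'.prod = r l.prod ∧ l'.length ≤ l.length := by
  induction l with
  | nil => exact ⟨[], by intro y hy; simp at hy, by simp, le_rfl⟩
  | cons s l ih =>
    obtain ⟨l', h1, h2, h3⟩ := ih (fun y hy => hl y (List.mem_cons_of_mem _ hy))
    have hs : (r s ∈ T ∨ (r s)⁻¹ ∈ T) ∨ r s = 1 := by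
      rcases hl s (by simp) with h | h
      · rcases hr s h with h | h
        · exact Or.inl (Or.inl h)
        · exact Or.inr h
      · rcases hr _ h with h | h
        · rw [map_inv] at h; exact Or.inl (Or.inr h)
        · rw [map_inv, inv_eq_one] at h; exact Or.inr h
    rcases hs with hs | hs
    · refine ⟨r s :: l', ?_, by simp [h2], by simpa using h3⟩
      intro y hy
      rcases List.mem_cons.1 hy with rfl | hy
      · exact hs
      · exact h1 y hy
    · refine ⟨l', h1, by simp [h2, hs], by simp; omega⟩

theorem Fac.mk' (hret : ∀ a, r (φ a) = a) (hφ : ∀ s ∈ T, φ s ∈ S)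
    (hr : ∀ s ∈ S, r s ∈ T ∨ r s = 1) (hT : Subgroup.closure T = ⊤)
    (hS : Subgroup.closure S = ⊤) : Fac φ r T S where
  ret := hret
  topK := hT
  iso a b := by
    apply le_antisymm
    · obtain ⟨l, h1, h2, h3⟩ := wd_exists hT a b
      rw [h3]
      have : (l.map φ).length = l.length := by simp
      rw [← this]
      apply wd_le
      · intro y hy
        obtain ⟨x, hx, rfl⟩ := List.mem_map.1 hy
        rcases h1 x hx with h | h
        · exact Or.inl (hφ x h)
        · right; rw [← map_inv]; exact hφ _ h
      · rw [← map_list_prod, h2]; simp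
    · obtain ⟨l, h1, h2, h3⟩ := wd_exists hS (φ a) (φ b)
      rw [h3]
      obtain ⟨l', h1', h2', h3'⟩ := shrink_word (r := r) hr l h1
      have : wordDist T a b ≤ l'.length := by
        apply wd_le h1'
        rw [h2', h2]; simp [hret]
      exact this.trans (by exact_mod_cast h3')


theorem Fac.back (F : Fac φ r T S) {x : G} (hx : x ∈ φ.range) : φ (r x) = x := by
  obtain ⟨a, rfl⟩ := hx
  rw [F.ret]

theorem Fac.iso' (F : Fac φ r T S) {x y : G} (hx : x ∈ φ.range) (hy : y ∈ φ.range) :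
    wordDist T (r x) (r y) = wordDist S x y := by
  rw [← F.iso, F.back hx, F.back hy]

theorem Fac.geo (F : Fac φ r T S) {p : ℕ → K} {s : Set ℕ} (h : IsGeodesicOnN (wordDist T) p s) :
    IsGeodesicOnN (wordDist S) (fun j => φ (p j)) s := by
  intro i hi j hj
  rw [F.iso]; exact h i hi j hj

theorem Fac.geo_back (F : Fac φ r T S) {p : ℕ → G} {s : Set ℕ} (hp : ∀ j ∈ s, p j ∈ φ.range)
    (h : IsGeodesicOnN (wordDist S) p s) :
    IsGeodesicOnN (wordDist T) (fun j => r (p j)) s := by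
  intro i hi j hj
  rw [F.iso' (hp i hi) (hp j hj)]; exact h i hi j hj

theorem Fac.morse (F : Fac φ r T S) {p : ℕ → K} {s : Set ℕ} {M : MorseGauge} (h : IsMorseOnN (wordDist T) M p s) :
    RelMorse (wordDist S) (φ.range : Set G) M (fun j => φ (p j)) s := by
  intro L e hL he η a b hab hη hq ha hb i hi
  have conv : ∀ m, η m ∈ (fun j => φ (p j)) '' s → r (η m) ∈ p '' s := by
    rintro m ⟨j, hj, hj'⟩
    exact ⟨j, hj, by rw [← hj']; exact (F.ret _).symm⟩
  obtain ⟨j, hj, hj'⟩ := h L e hL he (fun m => r (η m)) a b hab (by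
    intro i hi j hj
    rw [F.iso' (hη i hi) (hη j hj)]; exact hq i hi j hj) (conv a ha) (conv b hb) i hi
  refine ⟨j, hj, ?_⟩
  change wordDist S (η i) (φ (p j)) ≤ _
  rw [← F.back (hη i hi), F.iso]; exact hj'

theorem Fac.morse_back (F : Fac φ r T S) {p : ℕ → G} {s : Set ℕ} {M : MorseGauge} (hp : ∀ j ∈ s, p j ∈ φ.range)
    (h : RelMorse (wordDist S) (φ.range : Set G) M p s) :
    IsMorseOnN (wordDist T) M (fun j => r (p j)) s := by
  intro L e hL he η a b hab hq ha hb i hi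
  have conv : ∀ m, η m ∈ (fun j => r (p j)) '' s → φ (η m) ∈ p '' s := by
    rintro m ⟨j, hj, hj'⟩
    exact ⟨j, hj, by rw [← hj']; exact (F.back (hp j hj)).symm⟩
  obtain ⟨j, hj, hj'⟩ := h L e hL he (fun m => φ (η m)) a b hab (fun i _ => ⟨_, rfl⟩) (by
    intro i hi j hj
    rw [F.iso]; exact hq i hi j hj) (conv a ha) (conv b hb) i hi
  refine ⟨j, hj, ?_⟩
  rw [← F.iso, F.back (hp j hj)]; exact hj'

theorem Fac.pt (F : Fac φ r T S) {M : MorseGauge} {x : K} (h : MorsePtN (wordDist T) 1 M x) :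
    ∃ (n : ℕ) (p : ℕ → G), p 0 = 1 ∧ p n = φ x ∧ (∀ j, p j ∈ φ.range) ∧
      IsGeodesicOnN (wordDist S) p (Iic n) ∧
      RelMorse (wordDist S) (φ.range : Set G) M p (Iic n) := by
  obtain ⟨n, p, h0, h1, h2, h3⟩ := h
  exact ⟨n, fun j => φ (p j), by simp [h0], by simp [h1], fun j => ⟨_, rfl⟩, F.geo h2, F.morse h3⟩

theorem Fac.pt_back (F : Fac φ r T S) {M : MorseGauge} {x : K} {n : ℕ} {p : ℕ → G} (h0 : p 0 = 1) (h1 : p n = φ x)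
    (hp : ∀ j ≤ n, p j ∈ φ.range) (h2 : IsGeodesicOnN (wordDist S) p (Iic n))
    (h3 : RelMorse (wordDist S) (φ.range : Set G) M p (Iic n)) : MorsePtN (wordDist T) 1 M x :=
  ⟨n, fun j => r (p j), by simp [h0], by simp [h1, F.ret], F.geo_back hp h2, F.morse_back hp h3⟩

theorem quot_bdd (hT : Subgroup.closure T = ⊤) {γ γ' : MRayN (wordDist T) (1 : K)}
    (h : (Quot.mk _ γ : MorseBoundaryN (wordDist T) (1 : K)) = Quot.mk _ γ') :
    ∃ C, ∀ i, wordDist T (γ.1 i) (γ'.1 i) ≤ C := by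
  have P := wd_PM hT
  have h1 := Quot.eqvGen_exact h
  clear h
  induction h1 with
  | rel x y h => exact h
  | refl x => exact ⟨0, fun i => (P.self _).le⟩
  | symm x y _ ih => obtain ⟨C, hC⟩ := ih; exact ⟨C, fun i => by rw [P.comm]; exact hC i⟩
  | trans x y z _ _ ih1 ih2 =>
    obtain ⟨C, hC⟩ := ih1
    obtain ⟨D, hD⟩ := ih2
    exact ⟨C + D, fun i => (P.tri _ _ _).trans (add_le_add (hC i) (hD i))⟩

/-- The path `ζ` is the image of a ray with class `z`. -/
def RealF (φ : K →* G) (T : Set K) (z : MorseBoundaryN (wordDist T) (1 : K)) (ζ : ℕ → G) : Prop :=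
  ∃ ζ' : MRayN (wordDist T) (1 : K), Quot.mk _ ζ' = z ∧ ∀ s, ζ s = φ (ζ'.1 s)

theorem Fac.real_ex (F : Fac φ r T S) {M : MorseGauge} {z : MorseBoundaryN (wordDist T) (1 : K)}
    (h : MorseDirN (wordDist T) 1 M z) :
    ∃ ζ : ℕ → G, RealF φ T z ζ ∧ ζ 0 = 1 ∧ IsGeodesicOnN (wordDist S) ζ univ ∧
      (∀ s, ζ s ∈ φ.range) ∧ RelMorse (wordDist S) (φ.range : Set G) M ζ univ := by
  obtain ⟨γ, h1, h2⟩ := h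
  exact ⟨fun s => φ (γ.1 s), ⟨γ, h2, fun _ => rfl⟩, by simp [γ.2.1], F.geo γ.2.2.1,
    fun s => ⟨_, rfl⟩, F.morse h1⟩

theorem Fac.real_bdd (F : Fac φ r T S) {z : MorseBoundaryN (wordDist T) (1 : K)} {ζ ζ' : ℕ → G}
    (h : RealF φ T z ζ) (h' : RealF φ T z ζ') : ∃ C, ∀ s, wordDist S (ζ s) (ζ' s) ≤ C := by
  obtain ⟨γ, h1, h2⟩ := h
  obtain ⟨γ', h1', h2'⟩ := h'
  obtain ⟨C, hC⟩ := quot_bdd F.topK (h1.trans h1'.symm)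
  exact ⟨C, fun s => by rw [h2, h2', F.iso]; exact hC s⟩

theorem Fac.real_inj (F : Fac φ r T S) {z z' : MorseBoundaryN (wordDist T) (1 : K)} {ζ ζ' : ℕ → G} {C : ℝ}
    (h : RealF φ T z ζ) (h' : RealF φ T z' ζ') (hC : ∀ s, wordDist S (ζ s) (ζ' s) ≤ C) :
    z = z' := by
  obtain ⟨γ, h1, h2⟩ := h
  obtain ⟨γ', h1', h2'⟩ := h'
  rw [← h1, ← h1']
  apply Quot.sound
  exact ⟨C, fun s => by rw [← F.iso, ← h2, ← h2']; exact hC s⟩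

theorem Fac.real_back (F : Fac φ r T S) {M : MorseGauge} {ζ : ℕ → G} (h0 : ζ 0 = 1)
    (h1 : IsGeodesicOnN (wordDist S) ζ univ) (h2 : ∀ s, ζ s ∈ φ.range)
    (h3 : RelMorse (wordDist S) (φ.range : Set G) M ζ univ) :
    ∃ z : MorseBoundaryN (wordDist T) (1 : K), RealF φ T z ζ ∧ MorseDirN (wordDist T) 1 M z := by
  have hm := F.morse_back (fun j _ => h2 j) h3
  let γ : MRayN (wordDist T) (1 : K) :=
    ⟨fun s => r (ζ s), by simp [h0], F.geo_back (fun j _ => h2 j) h1, M, hm⟩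
  exact ⟨Quot.mk _ γ, ⟨γ, rfl, fun s => (F.back (h2 s)).symm⟩, ⟨γ, hm, rfl⟩⟩

end Transfer

section Concrete

variable (A B : Type) [Group A] [Group B] (SA : Set A) (SB : Set B)

theorem fp_top (hA : Subgroup.closure SA = ⊤) (hB : Subgroup.closure SB = ⊤) :
    Subgroup.closure (fpGens SA SB) = ⊤ := by
  unfold fpGens
  rw [Subgroup.closure_union]
  have h1 : Subgroup.closure ((fun a : A => (Monoid.Coprod.inl a : Monoid.Coprod A B)) '' SA)
      = (Monoid.Coprod.inl : A →* Monoid.Coprod A B).range := by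
    rw [MonoidHom.range_eq_map, ← hA, MonoidHom.map_closure]
  have h2 : Subgroup.closure ((fun b : B => (Monoid.Coprod.inr b : Monoid.Coprod A B)) '' SB)
      = (Monoid.Coprod.inr : B →* Monoid.Coprod A B).range := by
    rw [MonoidHom.range_eq_map, ← hB, MonoidHom.map_closure]
  rw [h1, h2, Monoid.Coprod.range_inl_sup_range_inr]

theorem fac_geo (hA : Subgroup.closure SA = ⊤) (hB : Subgroup.closure SB = ⊤) :
    Geo (facH A B) (facRho A B) (fpGens SA SB) where
  tree := facTree A B
  top := fp_top A B SA SB hA hB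
  gen s hs := by
    have key : ∀ s ∈ fpGens SA SB, ∃ τ, s ∈ facH A B τ := by
      rintro s (⟨a, _, rfl⟩ | ⟨b, _, rfl⟩)
      · exact ⟨true, a, rfl⟩
      · exact ⟨false, b, rfl⟩
    rcases hs with h | h
    · exact key s h
    · obtain ⟨τ, hτ⟩ := key _ h
      exact ⟨τ, by simpa using hτ⟩

theorem fac_A (hA : Subgroup.closure SA = ⊤) (hB : Subgroup.closure SB = ⊤) :
    Fac (Monoid.Coprod.inl : A →* Monoid.Coprod A B) Monoid.Coprod.fst SA (fpGens SA SB) := by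
  apply Fac.mk' _ _ _ hA (fp_top A B SA SB hA hB)
  · intro a; simp
  · intro s hs; exact Or.inl ⟨s, hs, rfl⟩
  · rintro s (⟨a, h, rfl⟩ | ⟨b, _, rfl⟩)
    · left; simpa using h
    · right; simp

theorem fac_B (hA : Subgroup.closure SA = ⊤) (hB : Subgroup.closure SB = ⊤) :
    Fac (Monoid.Coprod.inr : B →* Monoid.Coprod A B) Monoid.Coprod.snd SB (fpGens SA SB) := by
  apply Fac.mk' _ _ _ hB (fp_top A B SA SB hA hB)
  · intro a; simp
  · intro s hs; exact Or.inr ⟨s, hs, rfl⟩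
  · rintro s (⟨a, h, rfl⟩ | ⟨b, h, rfl⟩)
    · right; simp
    · left; simpa using h

theorem facH_true : facH A B true = (Monoid.Coprod.inl : A →* Monoid.Coprod A B).range := rfl

theorem facH_false : facH A B false = (Monoid.Coprod.inr : B →* Monoid.Coprod A B).range := rfl

variable {A B}

theorem mem_facH {b : Bool} {h : Monoid.Coprod A B} :
    h ∈ facH A B b ↔ ∃ y : A ⊕ B, y.isLeft = b ∧ sylElem y = h := by
  constructor
  · intro hh
    cases b
    · obtain ⟨y, hy⟩ := hh
      exact ⟨Sum.inr y, rfl, hy⟩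
    · obtain ⟨y, hy⟩ := hh
      exact ⟨Sum.inl y, rfl, hy⟩
  · rintro ⟨y, rfl, rfl⟩
    rcases y with y | y
    · exact ⟨y, rfl⟩
    · exact ⟨y, rfl⟩

theorem sylElem_inj {x y : A ⊕ B} (h : x.isLeft = y.isLeft) (h' : sylElem x = sylElem y) :
    x = y := by
  rcases x with x | x <;> rcases y with y | y
  · exact congrArg _ (Monoid.Coprod.inl_injective h')
  · simp at h
  · simp at h
  · exact congrArg _ (Monoid.Coprod.inr_injective h')

theorem sylElem_ne {x : A ⊕ B} : sylElem x ≠ 1 ↔ (x ≠ Sum.inl (1 : A) ∧ x ≠ Sum.inr (1 : B)) := by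
  rcases x with x | x
  · have : sylElem (Sum.inl x : A ⊕ B) = 1 ↔ x = 1 := by
      change (Monoid.Coprod.inl x : Monoid.Coprod A B) = 1 ↔ _
      exact map_eq_one_iff _ Monoid.Coprod.inl_injective
    simp [this]
  · have : sylElem (Sum.inr x : A ⊕ B) = 1 ↔ x = 1 := by
      change (Monoid.Coprod.inr x : Monoid.Coprod A B) = 1 ↔ _
      exact map_eq_one_iff _ Monoid.Coprod.inr_injective
    simp [this]

variable {SA SB}

theorem pt_ex (hA : Subgroup.closure SA = ⊤) (hB : Subgroup.closure SB = ⊤) {M : MorseGauge}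
    {x : A ⊕ B} (h : MorsePtSum (wordDist SA) (wordDist SB) M x) :
    ∃ (n : ℕ) (p : ℕ → Monoid.Coprod A B), p 0 = 1 ∧ p n = sylElem x ∧
      (∀ j, p j ∈ facH A B x.isLeft) ∧ IsGeodesicOnN (wordDist (fpGens SA SB)) p (Iic n) ∧
      RelMorse (wordDist (fpGens SA SB)) (facH A B x.isLeft) M p (Iic n) := by
  rcases x with x | x
  · exact (fac_A A B SA SB hA hB).pt h
  · exact (fac_B A B SA SB hA hB).pt h

theorem pt_back (hA : Subgroup.closure SA = ⊤) (hB : Subgroup.closure SB = ⊤) {M : MorseGauge}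
    {x : A ⊕ B} {n : ℕ} {p : ℕ → Monoid.Coprod A B} (h0 : p 0 = 1) (h1 : p n = sylElem x)
    (hp : ∀ j ≤ n, p j ∈ facH A B x.isLeft)
    (h2 : IsGeodesicOnN (wordDist (fpGens SA SB)) p (Iic n))
    (h3 : RelMorse (wordDist (fpGens SA SB)) (facH A B x.isLeft) M p (Iic n)) :
    MorsePtSum (wordDist SA) (wordDist SB) M x := by
  rcases x with x | x
  · exact (fac_A A B SA SB hA hB).pt_back h0 h1 hp h2 h3
  · exact (fac_B A B SA SB hA hB).pt_back h0 h1 hp h2 h3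

/-- The path `ζ` is a ray in a factor realizing `z`. -/
def RealSum (SA : Set A) (SB : Set B) :
    MorseBoundaryN (wordDist SA) (1 : A) ⊕ MorseBoundaryN (wordDist SB) (1 : B) →
      (ℕ → Monoid.Coprod A B) → Prop
  | Sum.inl z, ζ => RealF (Monoid.Coprod.inl : A →* Monoid.Coprod A B) SA z ζ
  | Sum.inr z, ζ => RealF (Monoid.Coprod.inr : B →* Monoid.Coprod A B) SB z ζ

variable {z z' : MorseBoundaryN (wordDist SA) (1 : A) ⊕ MorseBoundaryN (wordDist SB) (1 : B)}
  {ζ ζ' : ℕ → Monoid.Coprod A B}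

theorem RealSum.mem (h : RealSum SA SB z ζ) (s : ℕ) : ζ s ∈ facH A B z.isLeft := by
  rcases z with z | z
  · obtain ⟨γ, _, h2⟩ := h; exact ⟨γ.1 s, (h2 s).symm⟩
  · obtain ⟨γ, _, h2⟩ := h; exact ⟨γ.1 s, (h2 s).symm⟩

theorem realSum_ex (hA : Subgroup.closure SA = ⊤) (hB : Subgroup.closure SB = ⊤) {M : MorseGauge}
    (h : MorseDirSum (wordDist SA) (wordDist SB) M z) :
    ∃ ζ : ℕ → Monoid.Coprod A B, RealSum SA SB z ζ ∧ ζ 0 = 1 ∧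
      IsGeodesicOnN (wordDist (fpGens SA SB)) ζ univ ∧
      (∀ s, ζ s ∈ facH A B z.isLeft) ∧
      RelMorse (wordDist (fpGens SA SB)) (facH A B z.isLeft) M ζ univ := by
  rcases z with z | z
  · exact (fac_A A B SA SB hA hB).real_ex h
  · exact (fac_B A B SA SB hA hB).real_ex h

theorem realSum_bdd (hA : Subgroup.closure SA = ⊤) (hB : Subgroup.closure SB = ⊤)
    (h : RealSum SA SB z ζ) (h' : RealSum SA SB z ζ') :
    ∃ C, ∀ s, wordDist (fpGens SA SB) (ζ s) (ζ' s) ≤ C := by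
  rcases z with z | z
  · exact (fac_A A B SA SB hA hB).real_bdd h h'
  · exact (fac_B A B SA SB hA hB).real_bdd h h'

theorem realSum_inj (hA : Subgroup.closure SA = ⊤) (hB : Subgroup.closure SB = ⊤)
    (hz : z.isLeft = z'.isLeft) (h : RealSum SA SB z ζ) (h' : RealSum SA SB z' ζ') {C : ℝ}
    (hC : ∀ s, wordDist (fpGens SA SB) (ζ s) (ζ' s) ≤ C) : z = z' := by
  rcases z with z | z <;> rcases z' with z' | z'
  · exact congrArg _ ((fac_A A B SA SB hA hB).real_inj h h' hC)
  · simp at hz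
  · simp at hz
  · exact congrArg _ ((fac_B A B SA SB hA hB).real_inj h h' hC)

theorem realSum_back (hA : Subgroup.closure SA = ⊤) (hB : Subgroup.closure SB = ⊤)
    {M : MorseGauge} {b : Bool} (h0 : ζ 0 = 1)
    (h1 : IsGeodesicOnN (wordDist (fpGens SA SB)) ζ univ) (h2 : ∀ s, ζ s ∈ facH A B b)
    (h3 : RelMorse (wordDist (fpGens SA SB)) (facH A B b) M ζ univ) :
    ∃ z : MorseBoundaryN (wordDist SA) (1 : A) ⊕ MorseBoundaryN (wordDist SB) (1 : B),
      z.isLeft = b ∧ RealSum SA SB z ζ ∧ MorseDirSum (wordDist SA) (wordDist SB) M z := by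
  cases b
  · obtain ⟨z, hz, hz'⟩ := (fac_B A B SA SB hA hB).real_back h0 h1 h2 h3
    exact ⟨Sum.inr z, rfl, hz, hz'⟩
  · obtain ⟨z, hz, hz'⟩ := (fac_A A B SA SB hA hB).real_back h0 h1 h2 h3
    exact ⟨Sum.inl z, rfl, hz, hz'⟩

end Concrete

section Syll

variable {A B : Type} [Group A] [Group B] {SA : Set A} {SB : Set B}

theorem vv_congr {G : Type*} [Group G] {g g' : ℕ → G} {N : ℕ∞}
    (h : ∀ i : ℕ, (i : ℕ∞) < N → g i = g' i) : ∀ i : ℕ, (i : ℕ∞) ≤ N → vv g i = vv g' i := by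
  intro i
  induction i with
  | zero => intro _; rfl
  | succ i ih =>
    intro hi
    have h1 := lt_of_succ_le hi
    change vv g i * g i = vv g' i * g' i
    rw [ih h1.le, h i h1]

theorem RepCore.congr {G : Type*} [Group G] {H : Bool → Subgroup G} {g g' : ℕ → G} {N : ℕ∞}
    {t : ℕ → ℕ} {γ : ℕ → G} (h : ∀ i : ℕ, (i : ℕ∞) < N → g i = g' i) (R : RepCore H g N t γ) :
    RepCore H g' N t γ where
  zero := R.zero
  mono := R.mono
  pt i hi := by rw [← vv_congr h i hi]; exact R.pt i hi
  seg i hi s h1 h2 := by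
    have := R.seg i hi s h1 h2
    unfold Cs at this ⊢
    rwa [← vv_congr h i hi.le]
  tail n hn s h1 := by
    have := R.tail n hn s h1
    unfold Cs at this ⊢
    rwa [← vv_congr h n hn.ge]

theorem SynOK.congr {G : Type*} [Group G] {H : Bool → Subgroup G} {g g' : ℕ → G} {N : ℕ∞}
    (h : ∀ i : ℕ, (i : ℕ∞) < N → g i = g' i) (ok : SynOK H g N) : SynOK H g' N where
  mem i hi := by rw [← h i hi]; exact ok.mem i hi
  ne i h1 hi := by rw [← h i hi]; exact ok.ne i h1 hi

theorem par_even (n : ℕ) : par n = true ↔ Even n := by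
  induction n with
  | zero => simp [par]
  | succ n ih =>
    rw [Nat.even_add_one, ← ih]
    change (!par n) = true ↔ _
    cases par n <;> simp

/-- The elements of the free product given by an infinite sequence of syllables. -/
def gI (u : ℕ → A ⊕ B) (i : ℕ) : Monoid.Coprod A B := sylElem (u i)

/-- The elements of the free product given by a list of syllables. -/
def gL (l : List (A ⊕ B)) (i : ℕ) : Monoid.Coprod A B := (l[i]?).elim 1 sylElem

theorem sylProd_eq (u : ℕ → A ⊕ B) (i : ℕ) : sylProd u i = vv (gI u) i := by
  induction i with
  | zero => rfl
  | succ i ih =>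
    change _ = vv (gI u) i * gI u i
    rw [← ih]
    simp [sylProd, List.range_succ, gI]

theorem sylProdL_eq (l : List (A ⊕ B)) (i : ℕ) : sylProdL l i = vv (gL l) i := by
  induction i with
  | zero => simp [sylProdL, vv]
  | succ i ih =>
    change _ = vv (gL l) i * gL l i
    rw [← ih]
    unfold sylProdL gL
    rw [List.take_add_one]
    cases h : l[i]? <;> simp

theorem gL_lt {l : List (A ⊕ B)} {i : ℕ} (hi : i < l.length) : gL l i = sylElem l[i] := by
  simp [gL, hi]

theorem seq_par {u : ℕ → A ⊕ B} (h : SylSeqOK u) (i : ℕ) : (u i).isLeft = par i := by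
  induction i with
  | zero => exact h.1
  | succ i ih =>
    have := h.2.1 i
    rw [ih] at this
    exact Bool.eq_not_of_ne this.symm

theorem seq_ok {u : ℕ → A ⊕ B} (h : SylSeqOK u) : SynOK (facH A B) (gI u) ⊤ where
  mem i _ := mem_facH.2 ⟨u i, seq_par h i, rfl⟩
  ne i hi _ := sylElem_ne.2 (h.2.2 i hi)

theorem list_par {l : List (A ⊕ B)} (h : SylListOK l) (i : ℕ) (hi : i < l.length) :
    (l[i]).isLeft = par i := by
  induction i with
  | zero =>
    apply h.1
    rw [List.head?_eq_getElem?]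
    simp [hi]
  | succ i ih =>
    have h1 := (List.isChain_iff_getElem.1 h.2.1) i hi
    rw [ih (by omega)] at h1
    exact Bool.eq_not_of_ne h1.symm

theorem list_ok {l : List (A ⊕ B)} (h : SylListOK l) :
    SynOK (facH A B) (gL l) (l.length : ℕ∞) where
  mem i hi := by
    have hi : i < l.length := by exact_mod_cast hi
    rw [gL_lt hi]
    exact mem_facH.2 ⟨_, list_par h i hi, rfl⟩
  ne i h1 hi := by
    have hi : i < l.length := by exact_mod_cast hi
    rw [gL_lt hi]
    apply sylElem_ne.2 (h.2.2 _ _)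
    obtain ⟨k, rfl⟩ : ∃ k, i = k + 1 := ⟨i - 1, by omega⟩
    have : l[k + 1] = l.tail[k]'(by simp; omega) := by simp
    rw [this]; exact List.getElem_mem _

/-- Syllables from elements. -/
theorem syl_choose {g : ℕ → Monoid.Coprod A B} {N : ℕ∞} (ok : SynOK (facH A B) g N) :
    ∃ u : ℕ → A ⊕ B, ∀ i : ℕ, (u i).isLeft = par i ∧ ((i : ℕ∞) < N → sylElem (u i) = g i) := by
  have : ∀ i : ℕ, ∃ x : A ⊕ B, x.isLeft = par i ∧ ((i : ℕ∞) < N → sylElem x = g i) := by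
    intro i
    by_cases h : (i : ℕ∞) < N
    · obtain ⟨y, h1, h2⟩ := mem_facH.1 (ok.mem i h)
      exact ⟨y, h1, fun _ => h2⟩
    · obtain ⟨y, h1, h2⟩ := mem_facH.1 (one_mem (facH A B (par i)))
      exact ⟨y, h1, fun h' => absurd h' h⟩
  choose u hu using this
  exact ⟨u, hu⟩

theorem seq_ok_back {g : ℕ → Monoid.Coprod A B} (ok : SynOK (facH A B) g ⊤) {u : ℕ → A ⊕ B}
    (h1 : ∀ i : ℕ, (u i).isLeft = par i) (h2 : ∀ i : ℕ, sylElem (u i) = g i) : SylSeqOK u := by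
  refine ⟨h1 0, fun i => ?_, fun i hi => ?_⟩
  · rw [h1, h1]; change par i ≠ !par i; cases par i <;> simp
  · rw [← sylElem_ne, h2]; exact ok.ne i hi (ENat.natCast_lt_top i)

theorem list_ok_back {g : ℕ → Monoid.Coprod A B} {n : ℕ} (ok : SynOK (facH A B) g n)
    {u : ℕ → A ⊕ B} (h1 : ∀ i : ℕ, (u i).isLeft = par i)
    (h2 : ∀ i : ℕ, i < n → sylElem (u i) = g i) : SylListOK ((List.range n).map u) := by
  refine ⟨?_, ?_, ?_⟩
  · intro x hx
    rw [List.head?_eq_getElem?] at hx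
    rcases Nat.eq_zero_or_pos n with h | h
    · subst h; simp at hx
    · simp [h] at hx; rw [← hx]; exact h1 0
  · apply List.isChain_iff_getElem.2
    intro i hi
    simp only [List.getElem_map, List.getElem_range]
    rw [h1, h1]; change par i ≠ !par i; cases par i <;> simp
  · intro x hx
    obtain ⟨k, hk, rfl⟩ := List.getElem_of_mem hx
    simp only [List.getElem_tail, List.getElem_map, List.getElem_range]
    simp at hk
    rw [← sylElem_ne, h2 _ (by omega)]
    exact ok.ne _ (by omega) (by exact_mod_cast (by omega : k + 1 < n))

theorem gL_range {u : ℕ → A ⊕ B} {n i : ℕ} (hi : i < n) :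
    gL ((List.range n).map u) i = sylElem (u i) := by
  rw [gL_lt (by simpa using hi)]; simp

theorem mem_Cs_iff {g : ℕ → Monoid.Coprod A B} {k : ℕ} {x : Monoid.Coprod A B} :
    x ∈ Cs (facH A B) g k ↔ ∃ y : A ⊕ B, y.isLeft = par k ∧ x = vv g k * sylElem y := by
  unfold Cs
  rw [mem_ofPred_eq, mem_facH]
  constructor
  · rintro ⟨y, h1, h2⟩; exact ⟨y, h1, by rw [h2]; simp⟩
  · rintro ⟨y, h1, h2⟩; exact ⟨y, h1, by rw [h2]; simp⟩

theorem repInf_iff (c : CombInf (wordDist SA) (wordDist SB))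
    (η : MRayN (wordDist (fpGens SA SB)) (1 : Monoid.Coprod A B)) :
    RepInf SA SB c η ↔ ∃ t, RepCore (facH A B) (gI c.u) ⊤ t η.1 := by
  constructor
  · rintro ⟨t, h0, h1, h2, h3⟩
    refine ⟨t, h0, h1, fun i _ => by rw [h2, sylProd_eq], fun i _ s a b => ?_, fun n hn => ?_⟩
    · rw [mem_Cs_iff, ← seq_par c.ok, ← sylProd_eq]
      exact h3 i s a b
    · simp at hn
  · rintro ⟨t, R⟩
    refine ⟨t, R.zero, R.mono, fun i => by rw [sylProd_eq]; exact R.pt i le_top,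
      fun i s a b => ?_⟩
    have := R.seg i (ENat.natCast_lt_top i) s a b
    rwa [mem_Cs_iff, ← seq_par c.ok, ← sylProd_eq] at this

theorem fin_par (c : CombFin (wordDist SA) (wordDist SB)) : c.z.isLeft = par c.l.length := by
  have h1 := c.parity
  rw [← par_even] at h1
  exact (Bool.eq_iff_iff.2 h1).symm

theorem repFin_iff (c : CombFin (wordDist SA) (wordDist SB))
    (η : MRayN (wordDist (fpGens SA SB)) (1 : Monoid.Coprod A B)) :
    RepFin SA SB c η ↔ ∃ t, RepCore (facH A B) (gL c.l) c.l.length t η.1 ∧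
      RealSum SA SB c.z (fun s => (vv (gL c.l) c.l.length)⁻¹ * η.1 (t c.l.length + s)) := by
  have hz : ∀ t : ℕ → ℕ, (match c.z with
      | Sum.inl zA => ∃ ζ : MRayN (wordDist SA) (1 : A), Quot.mk _ ζ = zA ∧
          ∀ s, η.1 (t c.l.length + s) =
            sylProdL c.l c.l.length * Monoid.Coprod.inl (ζ.1 s)
      | Sum.inr zB => ∃ ζ : MRayN (wordDist SB) (1 : B), Quot.mk _ ζ = zB ∧
          ∀ s, η.1 (t c.l.length + s) =
            sylProdL c.l c.l.length * Monoid.Coprod.inr (ζ.1 s)) ↔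
      RealSum SA SB c.z (fun s => (vv (gL c.l) c.l.length)⁻¹ * η.1 (t c.l.length + s)) := by
    intro t
    rw [← sylProdL_eq]
    rcases c.z with z | z
    · simp only [RealSum, RealF, inv_mul_eq_iff_eq_mul]
    · simp only [RealSum, RealF, inv_mul_eq_iff_eq_mul]
  constructor
  · rintro ⟨t, h0, h1, h2, h3, h4⟩
    have h5 := (hz t).1 h4
    refine ⟨t, ⟨h0, h1, fun i hi => by rw [h2 i (by exact_mod_cast hi), sylProdL_eq],
      fun i hi s a b => ?_, fun n hn s hs => ?_⟩, h5⟩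
    · have hi : i < c.l.length := by exact_mod_cast hi
      rw [mem_Cs_iff, ← list_par c.ok i hi, ← sylProdL_eq]
      exact h3 i hi s a b
    · have hn : c.l.length = n := by exact_mod_cast hn
      subst hn
      have := h5.mem (s - t c.l.length)
      rw [Nat.add_sub_cancel' hs, fin_par] at this
      exact this
  · rintro ⟨t, R, h5⟩
    refine ⟨t, R.zero, R.mono, fun i hi => by rw [sylProdL_eq]; exact R.pt i (by exact_mod_cast hi),
      fun i hi s a b => ?_, (hz t).2 h5⟩
    have := R.seg i (by exact_mod_cast hi) s a b
    rwa [mem_Cs_iff, ← list_par c.ok i hi, ← sylProdL_eq] at this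

end Syll

section Final

variable {A B : Type} [Group A] [Group B] {SA : Set A} {SB : Set B}

theorem represents_ex (hA : Subgroup.closure SA = ⊤) (hB : Subgroup.closure SB = ⊤)
    (a : CombBoundary (wordDist SA) (wordDist SB)) : ∃ η, Represents SA SB a η := by
  have Q := fac_geo A B SA SB hA hB
  rcases a with c | c
  · obtain ⟨M, hM⟩ := c.morse
    choose ℓ p h0 h1 h2 h3 h4 using fun i => pt_ex hA hB (hM i)
    have hJ : ∀ k, segJ ⊤ ℓ k = Iic (ℓ k) := by
      intro k; ext j; simp [segJ]
    obtain ⟨t, γ, R, hg, hm, -⟩ := concat_exists Q (seq_ok c.ok) (ℓ := ℓ) (p := p) (M := M)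
      (fun k _ => h0 k) (fun k _ j _ => by rw [← seq_par c.ok]; exact h2 k j)
      (fun k _ => by rw [hJ]; exact h3 k) (fun k _ => h1 k)
      (fun k _ => by rw [hJ, ← seq_par c.ok]; exact h4 k)
    exact ⟨⟨γ, R.start, hg, _, hm⟩, (repInf_iff c _).2 ⟨t, R⟩⟩
  · obtain ⟨M, hM, hMz⟩ := c.morse
    obtain ⟨ζ, z1, z2, z3, z4, z5⟩ := realSum_ex hA hB hMz
    have key : ∀ k : ℕ, ∃ (ℓ : ℕ) (p : ℕ → Monoid.Coprod A B), (k : ℕ∞) ≤ c.l.length →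
        p 0 = 1 ∧ (∀ j, p j ∈ facH A B (par k)) ∧
        IsGeodesicOnN (wordDist (fpGens SA SB)) p {j | (k : ℕ∞) < c.l.length → j ≤ ℓ} ∧
        ((k : ℕ∞) < c.l.length → p ℓ = gL c.l k) ∧
        RelMorse (wordDist (fpGens SA SB)) (facH A B (par k)) M p
          {j | (k : ℕ∞) < c.l.length → j ≤ ℓ} ∧ (k = c.l.length → p = ζ) := by
      intro k
      by_cases hk : k < c.l.length
      · obtain ⟨ℓ, p, h0, h1, h2, h3, h4⟩ := pt_ex hA hB (hM c.l[k] (List.getElem_mem _))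
        have hk' : (k : ℕ∞) < c.l.length := by exact_mod_cast hk
        have e : {j | (k : ℕ∞) < c.l.length → j ≤ ℓ} = Iic ℓ := by
          ext j; simp [hk]
        rw [list_par c.ok k hk] at h2 h4
        refine ⟨ℓ, p, fun _ => ⟨h0, h2, ?_, fun _ => by rw [h1, gL_lt hk], ?_, fun h => by omega⟩⟩
        · rw [e]; exact h3
        · rw [e]; exact h4
      · refine ⟨0, ζ, fun hk2 => ?_⟩
        have hk2 : k ≤ c.l.length := by exact_mod_cast hk2
        have hk3 : k = c.l.length := by omega
        have hk' : ¬ (k : ℕ∞) < c.l.length := by exact_mod_cast hk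
        have e : {j : ℕ | (k : ℕ∞) < c.l.length → j ≤ 0} = univ := by
          ext j; simp [hk]
        rw [e, hk3, ← fin_par c]
        exact ⟨z2, z4, z3, fun h => absurd h (lt_irrefl _), z5, fun _ => rfl⟩
    choose ℓ p hp using key
    obtain ⟨t, γ, R, hg, hm, hγ⟩ := concat_exists Q (list_ok c.ok) (ℓ := ℓ) (p := p) (M := M)
      (fun k hk => (hp k hk).1) (fun k hk j _ => (hp k hk).2.1 j)
      (fun k hk => (hp k hk).2.2.1) (fun k hk => (hp k hk.le).2.2.2.1 hk)
      (fun k hk => (hp k hk).2.2.2.2.1)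
    refine ⟨⟨γ, R.start, hg, _, hm⟩, (repFin_iff c _).2 ⟨t, R, ?_⟩⟩
    have e : (fun s => (vv (gL c.l) c.l.length)⁻¹ * γ (t c.l.length + s)) = ζ := by
      funext s
      rw [hγ _ le_rfl s (fun h => absurd h (lt_irrefl _)), (hp _ le_rfl).2.2.2.2.2 rfl]
      simp
    change RealSum SA SB c.z (fun s => (vv (gL c.l) c.l.length)⁻¹ * γ (t c.l.length + s))
    rw [e]; exact z1

theorem represents_bdd (hA : Subgroup.closure SA = ⊤) (hB : Subgroup.closure SB = ⊤)
    {a : CombBoundary (wordDist SA) (wordDist SB)}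
    {η η' : MRayN (wordDist (fpGens SA SB)) (1 : Monoid.Coprod A B)}
    (h : Represents SA SB a η) (h' : Represents SA SB a η') :
    ∃ C, ∀ i, wordDist (fpGens SA SB) (η.1 i) (η'.1 i) ≤ C := by
  have Q := fac_geo A B SA SB hA hB
  have P := wd_PM Q.top
  rcases a with c | c
  · obtain ⟨t, R⟩ := (repInf_iff c η).1 h
    obtain ⟨t', R'⟩ := (repInf_iff c η').1 h'
    obtain ⟨M, hM⟩ := η.2.2.2
    exact ⟨_, same_bdd_inf Q (seq_ok c.ok) R η.2.2.1 R' η'.2.2.1 hM⟩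
  · obtain ⟨t, R, hz⟩ := (repFin_iff c η).1 h
    obtain ⟨t', R', hz'⟩ := (repFin_iff c η').1 h'
    obtain ⟨C, hC⟩ := realSum_bdd hA hB hz hz'
    refine ⟨_, same_bdd_fin Q R η.2.2.1 R' η'.2.2.1 (C := C) fun s => ?_⟩
    have := hC s
    rwa [P.left] at this

theorem represents_inj (hA : Subgroup.closure SA = ⊤) (hB : Subgroup.closure SB = ⊤)
    {a a' : CombBoundary (wordDist SA) (wordDist SB)}
    {η η' : MRayN (wordDist (fpGens SA SB)) (1 : Monoid.Coprod A B)}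
    (h : Represents SA SB a η) (h' : Represents SA SB a' η') {C : ℝ}
    (hC : ∀ i, wordDist (fpGens SA SB) (η.1 i) (η'.1 i) ≤ C) : a = a' := by
  have Q := fac_geo A B SA SB hA hB
  have P := wd_PM Q.top
  rcases a with c | c <;> rcases a' with c' | c'
  · obtain ⟨t, R⟩ := (repInf_iff c η).1 h
    obtain ⟨t', R'⟩ := (repInf_iff c' η').1 h'
    obtain ⟨-, -, h3, -⟩ := rep_unique Q (seq_ok c.ok) R η.2.2.1 (seq_ok c'.ok) R' η'.2.2.1 hC
    have hu : c.u = c'.u := by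
      funext i
      apply sylElem_inj (by rw [seq_par c.ok, seq_par c'.ok])
      exact h3 i (ENat.natCast_lt_top i)
    cases c; cases c'
    cases hu
    rfl
  · obtain ⟨t, R⟩ := (repInf_iff c η).1 h
    obtain ⟨t', R', hz'⟩ := (repFin_iff c' η').1 h'
    have := (rep_unique Q (seq_ok c.ok) R η.2.2.1 (list_ok c'.ok) R' η'.2.2.1 hC).1
    simp at this
  · obtain ⟨t, R, hz⟩ := (repFin_iff c η).1 h
    obtain ⟨t', R'⟩ := (repInf_iff c' η').1 h'
    have := (rep_unique Q (list_ok c.ok) R η.2.2.1 (seq_ok c'.ok) R' η'.2.2.1 hC).1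
    simp at this
  · obtain ⟨t, R, hz⟩ := (repFin_iff c η).1 h
    obtain ⟨t', R', hz'⟩ := (repFin_iff c' η').1 h'
    obtain ⟨h1, -, h3, h4⟩ :=
      rep_unique Q (list_ok c.ok) R η.2.2.1 (list_ok c'.ok) R' η'.2.2.1 hC
    have hlen : c.l.length = c'.l.length := by exact_mod_cast h1
    have hl : c.l = c'.l := by
      apply List.ext_getElem hlen
      intro i hi hi'
      apply sylElem_inj (by rw [list_par c.ok, list_par c'.ok])
      rw [← gL_lt hi, ← gL_lt hi']
      exact h3 i (by exact_mod_cast hi)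
    have ht := h4 c.l.length le_rfl
    have hzz : c.z = c'.z := by
      apply realSum_inj hA hB (by rw [fin_par, fin_par, hl]) hz hz' (C := C)
      intro s
      rw [← hl, P.left, ← ht]
      exact hC _
    cases c; cases c'
    cases hl
    cases hzz
    rfl

theorem relMorse_back {G : Type*} [Group G] {S : Set G} {H : Bool → Subgroup G}
    {ρ : Bool → G → G} (Q : Geo H ρ S) {g : ℕ → G} {N : ℕ∞} {t : ℕ → ℕ} {γ : ℕ → G}
    (ok : SynOK H g N) (R : RepCore H g N t γ) {M : MorseGauge}
    (hM : IsMorseOnN (wordDist S) M γ univ) {k : ℕ} (hk : (k : ℕ∞) ≤ N) :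
    RelMorse (wordDist S) (H (par k)) M (fun j => (vv g k)⁻¹ * γ (t k + j))
      {j | (k : ℕ∞) < N → j ≤ t (k + 1) - t k} := by
  have P := wd_PM Q.top
  have h := R.seg_morse Q ok hM hk
  intro L e hL he η a b hab hη hq ha hb i hi
  have conv : ∀ m, η m ∈ (fun j => (vv g k)⁻¹ * γ (t k + j)) ''
      {j | (k : ℕ∞) < N → j ≤ t (k + 1) - t k} → vv g k * η m ∈ γ '' segI N t k := by
    rintro m ⟨j, hj, hj'⟩
    refine ⟨t k + j, ⟨by omega, fun h => ?_⟩, by rw [← hj']; simp⟩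
    have := hj h
    have : t k ≤ t (k + 1) := R.mono (Nat.le_succ k)
    omega
  obtain ⟨j, hj, hj'⟩ := h L e hL he (fun m => vv g k * η m) a b hab
    (fun i hi => by
      change (vv g k)⁻¹ * (vv g k * η i) ∈ H (par k)
      rw [inv_mul_cancel_left]; exact hη i hi)
    (fun i hi j hj => by rw [P.left]; exact hq i hi j hj) (conv a ha) (conv b hb) i hi
  refine ⟨j - t k, ?_, ?_⟩
  · intro h
    have := hj.2 h
    omega
  · have e : t k + (j - t k) = j := Nat.add_sub_cancel' hj.1
    change wordDist S (η i) ((vv g k)⁻¹ * γ (t k + (j - t k))) ≤ _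
    rw [e, ← P.left (vv g k), mul_inv_cancel_left]
    exact hj'

theorem geo_back {G : Type*} [Group G] {S : Set G} (P : PM (wordDist S)) {γ : ℕ → G}
    (hγ : IsGeodesicOnN (wordDist S) γ univ) (v : G) (c : ℕ) (s : Set ℕ) :
    IsGeodesicOnN (wordDist S) (fun j => v⁻¹ * γ (c + j)) s := by
  intro i _ j _
  rw [P.left, hγ _ trivial _ trivial]
  push_cast
  congr 1; ring

theorem represents_surj (hA : Subgroup.closure SA = ⊤) (hB : Subgroup.closure SB = ⊤)
    (η : MRayN (wordDist (fpGens SA SB)) (1 : Monoid.Coprod A B)) :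
    ∃ a : CombBoundary (wordDist SA) (wordDist SB), Represents SA SB a η := by
  have Q := fac_geo A B SA SB hA hB
  have P := wd_PM Q.top
  obtain ⟨M, hM⟩ := η.2.2.2
  obtain ⟨g, N, t, ok, R⟩ := rep_exists Q η.2.1 η.2.2.1
  obtain ⟨u, hu⟩ := syl_choose ok
  have hpt : ∀ k : ℕ, (k : ℕ∞) < N → MorsePtSum (wordDist SA) (wordDist SB) M (u k) := by
    intro k hk
    have h1 := relMorse_back Q ok R hM hk.le
    have e : {j | (k : ℕ∞) < N → j ≤ t (k + 1) - t k} = Iic (t (k + 1) - t k) := by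
      ext j; simp [hk]
    rw [e, ← (hu k).1] at h1
    have hm : t k ≤ t (k + 1) := R.mono (Nat.le_succ k)
    apply pt_back hA hB _ _ _ (geo_back P η.2.2.1 _ _ _) h1
    · simp [R.pt k hk.le]
    · change (vv g k)⁻¹ * η.1 (t k + (t (k + 1) - t k)) = _
      rw [Nat.add_sub_cancel' hm, R.pt (k + 1) (succ_le_of_lt' hk), (hu k).2 hk]
      simp [vv]
    · intro j hj
      rw [(hu k).1]
      exact R.seg k hk (t k + j) (by omega) (by omega)
  by_cases hN : N = ⊤
  · subst hN
    have h2 : ∀ i, sylElem (u i) = g i := fun i => (hu i).2 (ENat.natCast_lt_top i)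
    let c : CombInf (wordDist SA) (wordDist SB) :=
      ⟨u, seq_ok_back ok (fun i => (hu i).1) h2, M, fun i => hpt i (ENat.natCast_lt_top i)⟩
    exact ⟨Sum.inl c, (repInf_iff c η).2 ⟨t, R.congr fun i _ => (h2 i).symm⟩⟩
  · obtain ⟨n, rfl⟩ := ENat.ne_top_iff_exists.1 hN
    have h2 : ∀ i, i < n → sylElem (u i) = g i := fun i hi => (hu i).2 (by exact_mod_cast hi)
    have h1 := relMorse_back Q ok R hM le_rfl
    have e : {j | (n : ℕ∞) < n → j ≤ t (n + 1) - t n} = univ := by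
      ext j; simp
    rw [e] at h1
    obtain ⟨z, hz1, hz2, hz3⟩ := realSum_back hA hB (by simp [R.pt n le_rfl])
      (geo_back P η.2.2.1 _ _ _) (fun s => R.tail n rfl (t n + s) (by omega)) h1
    have hlen : ((List.range n).map u).length = n := by simp
    have hgl : ∀ i : ℕ, (i : ℕ∞) < n → g i = gL ((List.range n).map u) i := by
      intro i hi
      have hi : i < n := by exact_mod_cast hi
      rw [gL_range hi, h2 i hi]
    let c : CombFin (wordDist SA) (wordDist SB) :=
      ⟨(List.range n).map u, z, list_ok_back ok (fun i => (hu i).1) h2, by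
        rw [hlen, hz1, par_even], M, by
        intro x hx
        obtain ⟨i, hi, rfl⟩ := List.mem_map.1 hx
        exact hpt i (by exact_mod_cast List.mem_range.1 hi), hz3⟩
    have hc : c.l.length = n := hlen
    refine ⟨Sum.inr c, (repFin_iff c η).2 ⟨t, ?_, ?_⟩⟩
    · rw [hc]; exact R.congr hgl
    · rw [hc]
      change RealSum SA SB z (fun s => (vv (gL ((List.range n).map u)) n)⁻¹ * η.1 (t n + s))
      rw [← vv_congr hgl n le_rfl]
      exact hz2

end Final

/-- the map `Φ` from the combinatorial Morse boundary of `A ∗ B` to the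
Morse boundary of `A ∗ B`, sending a combinatorial Morse geodesic to the class of the
concatenated geodesic ray, is a (well-defined) bijection. -/
theorem stmt16 (A B : Type) [Group A] [Group B] (SA : Set A) (SB : Set B)
    (hSAfin : SA.Finite) (hSBfin : SB.Finite)
    (hSAgen : Subgroup.closure SA = ⊤) (hSBgen : Subgroup.closure SB = ⊤) :
    ∃ Φ : CombBoundary (wordDist SA) (wordDist SB) ≃
        MorseBoundaryN (wordDist (fpGens SA SB)) (1 : Monoid.Coprod A B),
      (∀ a, ∃ η, Represents SA SB a η) ∧
      (∀ a η, Represents SA SB a η → Φ a = Quot.mk _ η) := by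
  classical
  choose f hf using represents_ex hSAgen hSBgen
  have hT := fp_top A B SA SB hSAgen hSBgen
  have well : ∀ a η, Represents SA SB a η →
      (Quot.mk _ (f a) : MorseBoundaryN (wordDist (fpGens SA SB)) (1 : Monoid.Coprod A B))
        = Quot.mk _ η := fun a η h =>
    Quot.sound (represents_bdd hSAgen hSBgen (hf a) h)
  refine ⟨Equiv.ofBijective (fun a => Quot.mk _ (f a)) ⟨?_, ?_⟩,
    represents_ex hSAgen hSBgen, fun a η h => well a η h⟩
  · intro a a' h
    obtain ⟨C, hC⟩ := quot_bdd hT h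
    exact represents_inj hSAgen hSBgen (hf a) (hf a') hC
  · intro w
    induction w using Quot.ind with
    | mk η =>
      obtain ⟨a, ha⟩ := represents_surj hSAgen hSBgen η
      exact ⟨a, well a η ha⟩

end Statement16
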